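/- arXiv:1804.03514 — 2 statements merged into one kernel-verified Lean document; each statement's English description precedes it below -/
import Mathlib

section
/- Let q = 3. If d = 2 and β ∈ (0,1), then γ(3,β,2,n) → 1 as n → ∞. If d ≥ 3 and 1 − 3/(d+1) ≤ β < 1, then γ(3,β,d,n) → 1 as n → ∞. -/
open Filter

/-- Weight of a configuration of the `q`-state Potts model with parameter `β`
on the `d`-ary tree of height `n`.  A vertex of the tree is a pair of a depth
`k ≤ n` and a path of length `k`; the parent of a vertex of depth `k+1` is
obtained by dropping the last step of its path.  The weight is
`β ^ (number of monochromatic edges)`. -/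
noncomputable def treeWeight (q d n : ℕ) (β : ℝ)
    (σ : (Σ k : Fin (n + 1), (Fin k → Fin d)) → Fin q) : ℝ :=
  β ^ (Finset.univ.filter (fun p : Σ k : Fin n, (Fin (k + 1) → Fin d) =>
        σ ⟨p.1.succ, p.2⟩ = σ ⟨p.1.castSucc, fun i => p.2 i.castSucc⟩)).card

/-- The conditional probability, under the Gibbs distribution of the `q`-state
Potts model with parameter `β` on the `d`-ary tree `𝕋_{d,n}` of height `n`,
that the root receives colour `c` given that the leaves (the depth-`n`
vertices) are coloured according to `τ`. -/
noncomputable def condRootProb (q d n : ℕ) (β : ℝ)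
    (τ : (Fin n → Fin d) → Fin q) (c : Fin q) : ℝ :=
  (∑ σ ∈ Finset.univ.filter
      (fun σ : (Σ k : Fin (n + 1), (Fin k → Fin d)) → Fin q =>
        σ ⟨⟨0, n.succ_pos⟩, Fin.elim0⟩ = c ∧
          ∀ f : Fin n → Fin d, σ ⟨⟨n, n.lt_succ_self⟩, f⟩ = τ f),
      treeWeight q d n β σ) /
  (∑ σ ∈ Finset.univ.filter
      (fun σ : (Σ k : Fin (n + 1), (Fin k → Fin d)) → Fin q =>
        ∀ f : Fin n → Fin d, σ ⟨⟨n, n.lt_succ_self⟩, f⟩ = τ f),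
      treeWeight q d n β σ)

/-- `γ(q,β,d,n)`: the maximum, over boundary configurations `τ` and colours
`c₁, c₂`, of the ratio of conditional root marginals. -/
noncomputable def pottsGamma (q d : ℕ) (β : ℝ) (n : ℕ) : ℝ :=
  ⨆ τ : (Fin n → Fin d) → Fin q, ⨆ c₁ : Fin q, ⨆ c₂ : Fin q,
    condRootProb q d n β τ c₁ / condRootProb q d n β τ c₂

/-- The function `g_{c₁,c₂,β}` of the two-step recursion. -/
noncomputable def gfun (q d : ℕ) (β : ℝ) (c₁ c₂ : Fin q) (p : Fin d → Fin q → ℝ) : ℝ :=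
  ∏ k : Fin d,
    (1 - ((1 - β) * (p k c₁ - p k c₂)) /
      (β * p k c₂ + ∑ c ∈ Finset.univ.erase c₂, p k c))

/-- The function `h_{c₁,c₂,β}` of the two-step recursion. -/
noncomputable def hfun (q d : ℕ) (β : ℝ) (c₁ c₂ : Fin q) (p : Fin d → Fin q → ℝ) : ℝ :=
  1 + ((1 - β) * (1 - gfun q d β c₁ c₂ p)) /
    (β + ∑ c ∈ Finset.univ.erase c₂, gfun q d β c c₂ p)

/-- `Δ_α`: probability vectors on `q` colours whose entries are within a
factor `α` of each other. -/
def simplexAlpha (q : ℕ) (α : ℝ) : Set (Fin q → ℝ) :=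
  {p | (∀ i, 0 ≤ p i) ∧ (∑ i, p i) = 1 ∧ ∀ i j, p i ≤ α * p j}

/-- `M_{α,c₁,c₂,β}`: the maximum of `h_{c₁,c₂,β}` over `Δ_α^d`. -/
noncomputable def Mval (q d : ℕ) (α β : ℝ) (c₁ c₂ : Fin q) : ℝ :=
  sSup ((hfun q d β c₁ c₂) '' {p | ∀ k, p k ∈ simplexAlpha q α})

/-- `Ex_c(α)`: vectors with entries in `{1, α}`, whose `c`-entry is `1`
and with at least one entry equal to `α`. -/
def exSet (q : ℕ) (c : Fin q) (α : ℝ) : Set (Fin q → ℝ) :=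
  {p | (∀ c', p c' = 1 ∨ p c' = α) ∧ p c = 1 ∧ ∃ c', p c' = α}

/-- The function `f_u(d,β,x,y)` from the one-step analysis. -/
noncomputable def fU (d : ℕ) (β x y : ℝ) : ℝ :=
  (1 - (1 - β) * y) ^ d /
    ((1 - (1 - β) * y) ^ d +
      2 * (1 - (1 - β) * x) ^ ((d : ℝ) / 2) *
        (1 - (1 - β) * (1 - x - y)) ^ ((d : ℝ) / 2))

/-- The function `f_ℓ(d,β,x,y)` from the one-step analysis. -/
noncomputable def fL (d : ℕ) (β x y : ℝ) : ℝ :=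
  (1 - (1 - β) * x) ^ d /
    ((1 - (1 - β) * x) ^ d + (1 - (1 - β) * y) ^ d +
      (1 - (1 - β) * (1 - x - y)) ^ d)

/-- The pair of sequences `(u_n(d,β), ℓ_n(d,β))`, defined by
`u_0 = 1`, `ℓ_0 = 0`, `u_{n+1} = f_u(d,β,u_n,ℓ_n)`, `ℓ_{n+1} = f_ℓ(d,β,u_n,ℓ_n)`. -/
noncomputable def ulSeq (d : ℕ) (β : ℝ) : ℕ → ℝ × ℝ
  | 0 => (1, 0)
  | n + 1 =>
      (fU d β (ulSeq d β n).1 (ulSeq d β n).2,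
       fL d β (ulSeq d β n).1 (ulSeq d β n).2)

/-!
Call a positive weight vector `p` on the three colours balanced at level `E` if
`p i ^ 2 ≤ E ^ 2 * (p j * p k)` whenever `i, j, k` are distinct. The root weights at height two are
balanced at a level independent of the boundary, and two further generations always improve it.

Let `M` be the message sent along an edge by a vertex balanced at level `E`. Then
`M i ^ 2 / (M j * M k)` is at least its value for the extremal vector, and the slack in this bound
controls `(log M k - log M j) ^ 2`. Both estimates add up over the children of a vertex, with a
Cauchy–Schwarz loss that the degree condition bounds. Unequal weights `p j` and `p k` at that vertex
therefore force a larger `p i`, and the next message it sends is as balanced as if they were equal.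

The worst case is the critical number `(2 + β) / (1 - β)` of children, and there two generations
turn the level `exp a` into `exp (-F (-F a))` with `F = logMap β`. Since `-F (-F a) < a` for
`a > 0`, iteration drives the level to `1`. The estimate requires `E ≤ 2 + 2 * β`; above that
threshold cruder estimates gain a constant factor every two generations.
-/

section Recursion

variable {ι C : Type*} [Fintype ι] [Fintype C] {β : ℝ}

/-- The factor contributed to colour `c` of a vertex by a child whose colours have weights `p`,
namely `∑ c', β ^ [c' = c] * p c'`. -/
def edgeMsg (β : ℝ) (p : C → ℝ) (c : C) : ℝ := ∑ c', p c' - (1 - β) * p c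

/-- The colour weights of a vertex whose children have colour weights `P`: one step of the
recursion on trees. -/
def treeStep (β : ℝ) (P : ι → C → ℝ) (c : C) : ℝ := ∏ j, edgeMsg β (P j) c

theorem edgeMsg_pos (hβ : 0 < β) {p : C → ℝ} (hp : 0 ≤ p) (hp' : ∃ c, 0 < p c) (c : C) :
    0 < edgeMsg β p c := by
  have hsum : 0 < ∑ c', p c' :=
    Finset.sum_pos' (fun i _ => hp i) (hp'.imp fun i hi => ⟨Finset.mem_univ i, hi⟩)
  have hc : p c ≤ ∑ c', p c' := Finset.single_le_sum (fun i _ => hp i) (Finset.mem_univ c)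
  rw [edgeMsg]
  rcases (show 0 ≤ p c from hp c).eq_or_lt with h | h
  · rwa [← h, mul_zero, sub_zero]
  · linarith [mul_pos hβ h]

theorem treeStep_pos (hβ : 0 < β) {P : ι → C → ℝ} (hP : ∀ j, 0 ≤ P j)
    (hP' : ∀ j, ∃ c, 0 < P j c) (c : C) : 0 < treeStep β P c :=
  Finset.prod_pos fun j _ => edgeMsg_pos hβ (hP j) (hP' j) c

end Recursion

section Grafting

variable {q d n : ℕ}

/-- Vertices of the `d`-ary tree of height `n`, encoded by their depth and the path from the
root. -/
abbrev TreeVertex (d n : ℕ) : Type := Σ k : Fin (n + 1), (Fin k → Fin d)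

/-- The root of the `d`-ary tree of height `n`. -/
def treeRoot (d n : ℕ) : TreeVertex d n := ⟨⟨0, n.succ_pos⟩, Fin.elim0⟩

/-- The leaf of the `d`-ary tree at the end of the path `f`. -/
def treeLeaf (f : Fin n → Fin d) : TreeVertex d n := ⟨⟨n, n.lt_succ_self⟩, f⟩

/-- The vertex `v` of the `j`-th principal subtree, as a vertex of the whole tree. -/
def subtreeVertex (j : Fin d) (v : TreeVertex d n) : TreeVertex d (n + 1) :=
  ⟨v.1.succ, (Fin.cons j v.2 : Fin (v.1 + 1) → Fin d)⟩

/-- The colouring with root colour `c` that restricts to `s j` on the `j`-th principal subtree. -/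
def graft (c : Fin q) (s : Fin d → TreeVertex d n → Fin q) : TreeVertex d (n + 1) → Fin q :=
  fun v => Fin.cases (motive := fun k => (Fin k → Fin d) → Fin q) (fun _ => c)
    (fun k (f : Fin (k + 1) → Fin d) => s (f 0) ⟨k, Fin.tail f⟩) v.1 v.2

theorem eq_treeRoot_of_depth_eq_zero (f : Fin ((0 : Fin (n + 1)) : ℕ) → Fin d) :
    (⟨0, f⟩ : TreeVertex d n) = treeRoot d n := by
  unfold treeRoot
  congr
  exact Subsingleton.elim (α := Fin 0 → Fin d) _ _

theorem graft_treeRoot (c : Fin q) (s : Fin d → TreeVertex d n → Fin q) :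
    graft c s (treeRoot d (n + 1)) = c := rfl

theorem graft_treeLeaf (c : Fin q) (s : Fin d → TreeVertex d n → Fin q)
    (f : Fin (n + 1) → Fin d) : graft c s (treeLeaf f) = s (f 0) (treeLeaf (Fin.tail f)) := rfl

theorem graft_restrict (σ : TreeVertex d (n + 1) → Fin q) :
    graft (σ (treeRoot d (n + 1))) (fun j v => σ (subtreeVertex j v)) = σ := by
  funext ⟨k, f⟩
  induction k using Fin.cases with
  | zero =>
    rw [eq_treeRoot_of_depth_eq_zero f]
    rfl
  | succ k =>
    change σ (subtreeVertex (f (0 : Fin (k + 1))) ⟨k, Fin.tail (n := k) f⟩) = σ ⟨k.succ, f⟩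
    unfold subtreeVertex
    congr
    exact Fin.cons_self_tail (n := k) f

/-- Colourings of a tree correspond to a root colour together with colourings of the principal
subtrees. -/
def graftEquiv (q d n : ℕ) :
    Fin q × (Fin d → TreeVertex d n → Fin q) ≃ (TreeVertex d (n + 1) → Fin q) where
  toFun x := graft x.1 x.2
  invFun σ := (σ (treeRoot d (n + 1)), fun j v => σ (subtreeVertex j v))
  left_inv _ := rfl
  right_inv := graft_restrict

theorem graft_treeLeaf_eq_iff {c : Fin q} {s : Fin d → TreeVertex d n → Fin q}
    {τ : (Fin (n + 1) → Fin d) → Fin q} :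
    (∀ f, graft c s (treeLeaf f) = τ f) ↔ ∀ j f, s j (treeLeaf f) = τ (Fin.cons j f) := by
  simp only [graft_treeLeaf]
  exact ⟨fun h j f => h (Fin.cons j f),
    fun h f => by rw [h (f 0) (Fin.tail f), Fin.cons_self_tail]⟩

theorem treeWeight_eq_prod (β : ℝ) (σ : TreeVertex d n → Fin q) :
    treeWeight q d n β σ = ∏ k : Fin n, ∏ f : Fin (k + 1) → Fin d,
      if σ ⟨k.succ, f⟩ = σ ⟨k.castSucc, fun i => f i.castSucc⟩ then β else 1 := by
  rw [treeWeight, Finset.card_filter, ← Finset.prod_pow_eq_pow_sum, Fintype.prod_sigma]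
  simp only [pow_ite, pow_one, pow_zero]

theorem prod_fin_succ_fun {M α : Type*} [CommMonoid M] [Fintype α] {m : ℕ}
    (G : (Fin (m + 1) → α) → M) : ∏ f, G f = ∏ j, ∏ g : Fin m → α, G (Fin.cons j g) := by
  rw [← Fintype.prod_prod_type' fun (j : α) (g : Fin m → α) => G (Fin.cons j g)]
  exact (Fintype.prod_equiv (Fin.consEquiv fun _ => α) _ _ fun _ => rfl).symm

theorem treeWeight_graft (β : ℝ) (c : Fin q) (s : Fin d → TreeVertex d n → Fin q) :
    treeWeight q d (n + 1) β (graft c s) =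
      ∏ j, (if s j (treeRoot d n) = c then β else 1) * treeWeight q d n β (s j) := by
  rw [treeWeight_eq_prod, Fin.prod_univ_succ, Finset.prod_mul_distrib]
  congr 1
  · refine (prod_fin_succ_fun (m := 0) _).trans (Finset.prod_congr rfl fun j _ => ?_)
    refine (Fintype.prod_unique (ι := Fin 0 → Fin d) _).trans ?_
    have hchild : graft c s ⟨Fin.succ 0, (Fin.cons j default : Fin 1 → Fin d)⟩ =
        s j (treeRoot d n) := congrArg (s j) (eq_treeRoot_of_depth_eq_zero _)
    exact if_congr (by rw [← hchild]; rfl) rfl rfl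
  · simp only [treeWeight_eq_prod]
    rw [Finset.prod_comm]
    exact Finset.prod_congr rfl fun k _ => prod_fin_succ_fun (m := k + 1) _

end Grafting

section RootWeight

variable {q d n : ℕ} {β : ℝ}

/-- The total weight of the colourings with root colour `c` and leaves coloured by `τ`, that is,
the root marginal before normalisation. -/
noncomputable def rootWeight (q d n : ℕ) (β : ℝ) (τ : (Fin n → Fin d) → Fin q) (c : Fin q) : ℝ :=
  ∑ σ : TreeVertex d n → Fin q,
    if σ (treeRoot d n) = c ∧ ∀ f, σ (treeLeaf f) = τ f then treeWeight q d n β σ else 0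

theorem rootWeight_zero (β : ℝ) (τ : (Fin 0 → Fin d) → Fin q) :
    rootWeight q d 0 β τ = Pi.single (τ Fin.elim0) 1 := by
  funext c
  have hroot : ∀ v : TreeVertex d 0, v = treeRoot d 0 := by
    rintro ⟨k, f⟩
    obtain rfl := Subsingleton.elim (α := Fin 1) k 0
    exact eq_treeRoot_of_depth_eq_zero f
  have hconst : ∀ σ : TreeVertex d 0 → Fin q, σ ≠ (fun _ => c) → σ (treeRoot d 0) ≠ c :=
    fun σ hσ h => hσ (funext fun v => by rw [hroot v, h])
  have hleaf : (∀ f : Fin 0 → Fin d, c = τ f) ↔ c = τ Fin.elim0 :=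
    ⟨fun h => h _, fun h f => by rw [h, Subsingleton.elim f Fin.elim0]⟩
  rw [rootWeight, Finset.sum_eq_single (fun _ => c)
    (fun σ _ hσ => if_neg fun h => hconst σ hσ h.1) (by simp), treeWeight_eq_prod,
    Pi.single_apply]
  simp only [true_and, hleaf, Finset.univ_eq_empty, Finset.prod_empty]

theorem edgeMsg_rootWeight (β : ℝ) (τ : (Fin n → Fin d) → Fin q) (c : Fin q) :
    edgeMsg β (rootWeight q d n β τ) c =
      ∑ σ : TreeVertex d n → Fin q, if ∀ f, σ (treeLeaf f) = τ f then
        (if σ (treeRoot d n) = c then β else 1) * treeWeight q d n β σ else 0 := by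
  unfold edgeMsg rootWeight
  rw [Finset.sum_comm, Finset.mul_sum, ← Finset.sum_sub_distrib]
  refine Finset.sum_congr rfl fun σ _ => ?_
  by_cases h : ∀ f, σ (treeLeaf f) = τ f
  · simp only [h, implies_true, and_true, if_true, Finset.sum_ite_eq, Finset.mem_univ]
    split_ifs <;> ring
  · simp [h]

theorem rootWeight_succ (β : ℝ) (τ : (Fin (n + 1) → Fin d) → Fin q) :
    rootWeight q d (n + 1) β τ =
      treeStep β fun j => rootWeight q d n β fun f => τ (Fin.cons j f) := by
  funext c
  simp only [treeStep, edgeMsg_rootWeight]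
  rw [rootWeight, ← (graftEquiv q d n).sum_comp, Fintype.sum_prod_type, Finset.sum_eq_single c
    (fun c' _ hc' => Finset.sum_eq_zero fun s _ => if_neg fun h => hc' h.1) (by simp),
    Finset.prod_univ_sum, Fintype.piFinset_univ]
  refine Finset.sum_congr rfl fun s _ => ?_
  change (if graft c s (treeRoot d (n + 1)) = c ∧ ∀ f, graft c s (treeLeaf f) = τ f then
    treeWeight q d (n + 1) β (graft c s) else 0) = _
  have hsupport : (graft c s (treeRoot d (n + 1)) = c ∧ ∀ f, graft c s (treeLeaf f) = τ f) ↔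
      ∀ j f, s j (treeLeaf f) = τ (Fin.cons j f) := by
    rw [graft_treeLeaf_eq_iff, and_iff_right (graft_treeRoot c s)]
  rw [Fintype.prod_ite_zero, treeWeight_graft]
  by_cases h : ∀ j f, s j (treeLeaf f) = τ (Fin.cons j f)
  · rw [if_pos h, if_pos (hsupport.2 h)]
  · rw [if_neg h, if_neg (mt hsupport.1 h)]

theorem rootWeight_nonneg (hβ : 0 ≤ β) (τ : (Fin n → Fin d) → Fin q) :
    0 ≤ rootWeight q d n β τ := by
  intro c
  refine Finset.sum_nonneg fun σ _ => ?_
  split_ifs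
  exacts [pow_nonneg hβ _, le_rfl]

theorem exists_rootWeight_pos [NeZero q] (hβ : 0 < β) (τ : (Fin n → Fin d) → Fin q) :
    ∃ c, 0 < rootWeight q d n β τ c := by
  induction n with
  | zero => exact ⟨τ Fin.elim0, by simp [rootWeight_zero]⟩
  | succ n ih =>
    rw [rootWeight_succ]
    exact ⟨0, treeStep_pos hβ (fun _ => rootWeight_nonneg hβ.le _) (fun _ => ih _) _⟩

theorem condRootProb_eq (τ : (Fin n → Fin d) → Fin q) (c : Fin q) :
    condRootProb q d n β τ c = rootWeight q d n β τ c / ∑ c', rootWeight q d n β τ c' := by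
  rw [condRootProb, Finset.sum_filter, Finset.sum_filter]
  unfold rootWeight
  rw [Finset.sum_comm]
  refine congrArg₂ _ rfl (Finset.sum_congr rfl fun σ _ => ?_)
  change (if ∀ f, σ (treeLeaf f) = τ f then treeWeight q d n β σ else 0) = _
  by_cases h : ∀ f, σ (treeLeaf f) = τ f <;> simp [h]

theorem condRootProb_div [NeZero q] (hβ : 0 < β) (τ : (Fin n → Fin d) → Fin q) (c₁ c₂ : Fin q) :
    condRootProb q d n β τ c₁ / condRootProb q d n β τ c₂ =
      rootWeight q d n β τ c₁ / rootWeight q d n β τ c₂ := by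
  have hsum : 0 < ∑ c, rootWeight q d n β τ c :=
    Finset.sum_pos' (fun c _ => rootWeight_nonneg hβ.le τ c)
      ((exists_rootWeight_pos hβ τ).imp fun c hc => ⟨Finset.mem_univ c, hc⟩)
  rw [condRootProb_eq, condRootProb_eq, div_div_div_cancel_right₀ hsum.ne']

theorem pottsGamma_le [NeZero q] (hβ : 0 < β) {α : ℝ}
    (h : ∀ τ c₁ c₂, rootWeight q d n β τ c₁ / rootWeight q d n β τ c₂ ≤ α) :
    pottsGamma q d β n ≤ α :=
  ciSup_le fun τ => ciSup_le fun c₁ => ciSup_le fun c₂ =>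
    (condRootProb_div hβ τ c₁ c₂).trans_le (h τ c₁ c₂)

theorem one_le_pottsGamma [NeZero q] (hβ : 0 < β) : 1 ≤ pottsGamma q d β n := by
  obtain ⟨c, hc⟩ := exists_rootWeight_pos (n := n) (d := d) hβ fun _ => (0 : Fin q)
  have hratio : condRootProb q d n β (fun _ => 0) c / condRootProb q d n β (fun _ => 0) c = 1 := by
    rw [condRootProb_div hβ, div_self hc.ne']
  rw [← hratio]
  refine le_ciSup_of_le (Set.finite_range _).bddAbove (fun _ => 0) ?_
  refine le_ciSup_of_le (Set.finite_range _).bddAbove c ?_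
  exact le_ciSup_of_le (Set.finite_range _).bddAbove c le_rfl

end RootWeight

section ChildEstimate

/-- The product `(x + β r + s) (x + r + β s)` of the messages of colours `1` and `2` for the
weights `(x, r, s)`, normalised by `r s = 1`, as a function of `x` and `C = r + s`. -/
noncomputable def pairProd (β x C : ℝ) : ℝ :=
  x ^ 2 + (1 + β) * x * C + β * C ^ 2 + (1 - β) ^ 2

/-- The gap between the logarithm of the message of colour `0` and those of the other two colours,
with the squared logarithm of the ratio of the latter two penalised at rate `Q`, for the weights of
`pairProd`. -/
noncomputable def logGap (β Q x C : ℝ) : ℝ :=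
  2 * Real.log (β * x + C) - Real.log (pairProd β x C) -
    Q * (1 - β) / 4 * ((C ^ 2 - 4) / pairProd β x C)

/-- The numerator of `∂ logGap / ∂C`, without a factor `1 - β`. -/
noncomputable def logGapSlopeC (β Q x C : ℝ) : ℝ :=
  4 * ((2 + β) * x ^ 2 + (1 + 2 * β) * x * C + 2 * (1 - β)) * pairProd β x C -
    Q * (β * x + C) * (x * C + 2 * (1 + β)) * ((1 + β) * C + 2 * x)

/-- The numerator of `-∂ logGap / ∂x`, without a factor `1 - β`. -/
noncomputable def logGapSlopeX (β Q x C : ℝ) : ℝ :=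
  4 * pairProd β x C * ((2 + β) * x * C + (1 + 2 * β) * C ^ 2 - 2 * β * (1 - β)) -
    Q * (C ^ 2 - 4) * (2 * x + (1 + β) * C) * (β * x + C)

variable {β Q x C : ℝ}

theorem pairProd_add {r s : ℝ} (hrs : r * s = 1) :
    pairProd β x (r + s) = (x + β * r + s) * (x + r + β * s) := by
  unfold pairProd
  linear_combination (-(1 - β) ^ 2) * hrs

theorem pairProd_pos (hβ : 0 ≤ β) (hx : 0 < x) (hC : 0 < C) : 0 < pairProd β x C := by
  unfold pairProd
  positivity

theorem hasDerivAt_logGap_right (hβ : 0 ≤ β) (hx : 0 < x) (hC : 0 < C) :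
    HasDerivAt (fun C => logGap β Q x C)
      ((1 - β) * logGapSlopeC β Q x C / (4 * (β * x + C) * pairProd β x C ^ 2)) C := by
  have hw : β * x + C ≠ 0 := by positivity
  have hW : pairProd β x C ≠ 0 := (pairProd_pos hβ hx hC).ne'
  have hlin : HasDerivAt (fun C => β * x + C) 1 C := (hasDerivAt_id C).const_add _
  have hsq : HasDerivAt (fun C : ℝ => C ^ 2) (2 * C) C := by simpa using hasDerivAt_pow 2 C
  have hprod : HasDerivAt (fun C => pairProd β x C) ((1 + β) * x + β * (2 * C)) C := by
    simpa [pairProd] using ((((hasDerivAt_id C).const_mul ((1 + β) * x)).const_add (x ^ 2)).add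
      (hsq.const_mul β)).add_const ((1 - β) ^ 2)
  refine ((((hlin.log hw).const_mul 2).sub (hprod.log hW)).sub
    (((hsq.sub_const 4).div hprod hW).const_mul _)).congr_deriv ?_
  field_simp
  unfold logGapSlopeC pairProd
  ring

theorem hasDerivAt_logGap_left (hβ : 0 ≤ β) (hx : 0 < x) (hC : 0 < C) :
    HasDerivAt (fun x => logGap β Q x C)
      (-((1 - β) * logGapSlopeX β Q x C / (4 * (β * x + C) * pairProd β x C ^ 2))) x := by
  have hw : β * x + C ≠ 0 := by positivity
  have hW : pairProd β x C ≠ 0 := (pairProd_pos hβ hx hC).ne'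
  have hlin : HasDerivAt (fun x => β * x + C) β x := by
    simpa using ((hasDerivAt_id x).const_mul β).add_const C
  have hsq : HasDerivAt (fun x : ℝ => x ^ 2) (2 * x) x := by simpa using hasDerivAt_pow 2 x
  have hprod : HasDerivAt (fun x => pairProd β x C) (2 * x + (1 + β) * C) x := by
    simpa [pairProd] using (((hsq.add (((hasDerivAt_id x).const_mul (1 + β)).mul_const C)).add_const
      (β * C ^ 2)).add_const ((1 - β) ^ 2))
  refine ((((hlin.log hw).const_mul 2).sub (hprod.log hW)).sub
    (((hasDerivAt_const x (C ^ 2 - 4)).div hprod hW).const_mul _)).congr_deriv ?_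
  field_simp
  unfold logGapSlopeX pairProd
  ring

theorem monotoneOn_logGap_right (hβ0 : 0 ≤ β) (hβ1 : β ≤ 1) (hx : 0 < x)
    (h : ∀ c, 2 < c → c < C → 0 ≤ logGapSlopeC β Q x c) :
    MonotoneOn (fun c => logGap β Q x c) (Set.Icc 2 C) := by
  have hderiv : ∀ c : ℝ, 2 ≤ c → _ := fun c hc =>
    hasDerivAt_logGap_right (Q := Q) hβ0 hx (two_pos.trans_le hc)
  refine monotoneOn_of_deriv_nonneg (convex_Icc 2 C)
    (fun c hc => (hderiv c hc.1).continuousAt.continuousWithinAt)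
    (fun c hc => (hderiv c (interior_subset hc).1).differentiableAt.differentiableWithinAt)
    fun c hc => ?_
  rw [interior_Icc] at hc
  have hc0 : 0 < c := two_pos.trans hc.1
  rw [(hderiv c hc.1.le).deriv]
  exact div_nonneg (mul_nonneg (sub_nonneg.2 hβ1) (h c hc.1 hc.2)) (by positivity)

theorem antitoneOn_logGap_left {E : ℝ} (hβ0 : 0 ≤ β) (hβ1 : β ≤ 1) (hx : 0 < x) (hC : 0 < C)
    (h : ∀ y, x ≤ y → 0 ≤ logGapSlopeX β Q y C) :
    AntitoneOn (fun y => logGap β Q y C) (Set.Icc x E) := by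
  have hderiv : ∀ y : ℝ, x ≤ y → _ := fun y hy =>
    hasDerivAt_logGap_left (Q := Q) hβ0 (hx.trans_le hy) hC
  refine antitoneOn_of_deriv_nonpos (convex_Icc x E)
    (fun y hy => (hderiv y hy.1).continuousAt.continuousWithinAt)
    (fun y hy => (hderiv y (interior_subset hy).1).differentiableAt.differentiableWithinAt)
    fun y hy => ?_
  have hxy : x ≤ y := (interior_subset hy).1
  have hy0 : 0 < y := hx.trans_le hxy
  rw [(hderiv y hxy).deriv]
  exact neg_nonpos.2 (div_nonneg (mul_nonneg (sub_nonneg.2 hβ1) (h y hxy)) (by positivity))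

theorem sq_le_sinh_sq (t : ℝ) : t ^ 2 ≤ Real.sinh t ^ 2 := by
  refine sq_le_sq.2 ?_
  rw [Real.abs_sinh]
  exact Real.self_le_sinh_iff.2 (abs_nonneg t)

theorem log_sub_log_sq_le {a b : ℝ} (ha : 0 < a) (hb : 0 < b) :
    (Real.log a - Real.log b) ^ 2 ≤ (a - b) ^ 2 / (a * b) := by
  have hR : 0 < a / b := div_pos ha hb
  have hcosh : 2 * Real.sinh (Real.log (a / b) / 2) ^ 2 = Real.cosh (Real.log (a / b)) - 1 := by
    have := Real.cosh_two_mul (Real.log (a / b) / 2)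
    rw [Real.cosh_sq, mul_div_cancel₀ _ two_ne_zero] at this
    linarith
  have hsinh := sq_le_sinh_sq (Real.log (a / b) / 2)
  rw [← Real.log_div ha.ne' hb.ne']
  calc Real.log (a / b) ^ 2 ≤ 4 * Real.sinh (Real.log (a / b) / 2) ^ 2 := by linarith
    _ = 2 * (Real.cosh (Real.log (a / b)) - 1) := by rw [← hcosh]; ring
    _ = (a - b) ^ 2 / (a * b) := by rw [Real.cosh_log hR]; field_simp; ring

theorem add_one_div_le_add_one_div {r E : ℝ} (hr : 1 ≤ r) (hrE : r ≤ E) :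
    r + 1 / r ≤ E + 1 / E := by
  have hr0 : 0 < r := one_pos.trans_le hr
  have hE0 : 0 < E := hr0.trans_le hrE
  have hdiff : E + 1 / E - (r + 1 / r) = (E - r) * (E * r - 1) / (E * r) := by
    field_simp
    ring
  have hEr : 1 ≤ E * r := one_le_mul_of_one_le_of_one_le (hr.trans hrE) hr
  refine sub_nonneg.1 (hdiff ▸ ?_)
  exact div_nonneg (mul_nonneg (sub_nonneg.2 hrE) (sub_nonneg.2 hEr)) (by positivity)

/-- The sign conditions under which `logGap` is, over the weights `(x, r, 1 / r)` balanced at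
level `E`, minimal at `(E, 1, 1)`. -/
structure SlopesNonneg (β Q E : ℝ) : Prop where
  slopeC_nonneg : ∀ c, 2 < c → c < E + 1 / E → 0 ≤ logGapSlopeC β Q E c
  slopeX_nonneg : ∀ r x, 1 ≤ r → r ^ 3 ≤ E ^ 2 * x → 0 ≤ logGapSlopeX β Q x (r + 1 / r)

theorem logGap_two (hβ : 0 ≤ β) (hx : 0 < x) :
    logGap β Q x 2 = -(2 * Real.log ((x + 1 + β) / (β * x + 2))) := by
  have hprod : pairProd β x 2 = (x + 1 + β) ^ 2 := by unfold pairProd; ring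
  rw [logGap, hprod, Real.log_div (by positivity) (by positivity), Real.log_pow]
  push_cast
  ring

theorem SlopesNonneg.logGap_two_le {E r : ℝ} (h : SlopesNonneg β Q E) (hβ0 : 0 ≤ β) (hβ1 : β ≤ 1)
    (hx : 0 < x) (hr : 1 ≤ r) (hrx : r ^ 3 ≤ E ^ 2 * x) (hxE : x ≤ E) :
    logGap β Q E 2 ≤ logGap β Q x (r + 1 / r) := by
  have hE : 0 < E := hx.trans_le hxE
  have hrE : r ≤ E := by
    refine le_of_pow_le_pow_left₀ three_ne_zero hE.le (hrx.trans ?_)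
    rw [pow_succ E 2]
    gcongr
  have hC2 : 2 ≤ r + 1 / r := by
    simpa [one_add_one_eq_two] using add_one_div_le_add_one_div le_rfl hr
  have hCE := add_one_div_le_add_one_div hr hrE
  calc logGap β Q E 2 ≤ logGap β Q E (r + 1 / r) :=
        monotoneOn_logGap_right hβ0 hβ1 hE
          (fun c hc hc' => h.slopeC_nonneg c hc (hc'.trans_le hCE)) ⟨le_rfl, hC2⟩ ⟨hC2, le_rfl⟩ hC2
    _ ≤ logGap β Q x (r + 1 / r) :=
        antitoneOn_logGap_left hβ0 hβ1 hx (two_pos.trans_le hC2)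
          (fun y hy => h.slopeX_nonneg r y hr (hrx.trans (by gcongr)))
          ⟨le_rfl, hxE⟩ ⟨hxE, le_rfl⟩ hxE

theorem SlopesNonneg.log_bound_normalized {E r : ℝ} (h : SlopesNonneg β Q E) (hβ0 : 0 ≤ β)
    (hβ1 : β < 1) (hQ : 0 ≤ Q) (hx : 0 < x) (hr : 1 ≤ r) (hrx : r ^ 3 ≤ E ^ 2 * x) (hxE : x ≤ E) :
    Q * (Real.log (x + r + β * (1 / r)) - Real.log (x + β * r + 1 / r)) ^ 2 ≤
      4 * (1 - β) * (2 * Real.log ((E + 1 + β) / (β * E + 2)) +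
        2 * Real.log (β * x + (r + 1 / r)) - Real.log (x + β * r + 1 / r) -
          Real.log (x + r + β * (1 / r))) := by
  have hgap := h.logGap_two_le hβ0 hβ1.le hx hr hrx hxE
  have hr0 : 0 < r := one_pos.trans_le hr
  have hs0 : 0 < 1 / r := by positivity
  have hrs : r * (1 / r) = 1 := mul_one_div_cancel hr0.ne'
  generalize 1 / r = s at hgap hs0 hrs ⊢
  have hw₁ : 0 < x + β * r + s := by positivity
  have hw₂ : 0 < x + r + β * s := by positivity
  have hlog : (Real.log (x + r + β * s) - Real.log (x + β * r + s)) ^ 2 ≤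
      (1 - β) ^ 2 * (((r + s) ^ 2 - 4) / ((x + β * r + s) * (x + r + β * s))) := by
    refine (log_sub_log_sq_le hw₂ hw₁).trans_eq ?_
    rw [mul_comm (x + r + β * s), ← mul_div_assoc]
    congr 1
    linear_combination (-4 * (1 - β) ^ 2) * hrs
  rw [logGap_two hβ0 (hx.trans_le hxE), logGap, pairProd_add hrs,
    Real.log_mul hw₁.ne' hw₂.ne'] at hgap
  linear_combination Q * hlog + 4 * (1 - β) * hgap

theorem SlopesNonneg.log_bound {E p₁ p₂ p₃ : ℝ} (h : SlopesNonneg β Q E) (hβ0 : 0 ≤ β)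
    (hβ1 : β < 1) (hQ : 0 ≤ Q) (hE : 0 ≤ E) (h₁ : 0 < p₁) (h₂ : 0 < p₂) (h₃ : 0 < p₃)
    (hT₁ : p₁ ^ 2 ≤ E ^ 2 * (p₂ * p₃)) (hT₂ : p₂ ^ 2 ≤ E ^ 2 * (p₁ * p₃))
    (hT₃ : p₃ ^ 2 ≤ E ^ 2 * (p₁ * p₂)) :
    Q * (Real.log (p₁ + p₂ + β * p₃) - Real.log (p₁ + β * p₂ + p₃)) ^ 2 ≤
      4 * (1 - β) * (2 * Real.log ((E + 1 + β) / (β * E + 2)) +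
        2 * Real.log (β * p₁ + p₂ + p₃) - Real.log (p₁ + β * p₂ + p₃) -
          Real.log (p₁ + p₂ + β * p₃)) := by
  wlog hle : p₃ ≤ p₂ generalizing p₂ p₃ with H
  · have hswap := H h₃ h₂ (by linarith) hT₃ hT₂ (le_of_not_ge hle)
    rw [add_right_comm p₁ p₃, add_right_comm p₁ (β * p₃), add_right_comm (β * p₁)] at hswap
    linear_combination hswap
  obtain ⟨l, hl0, hll⟩ : ∃ l, 0 < l ∧ l ^ 2 = p₂ * p₃ :=
    ⟨√(p₂ * p₃), Real.sqrt_pos.2 (by positivity), Real.sq_sqrt (by positivity)⟩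
  obtain ⟨r, hr0, rfl⟩ : ∃ r, 0 < r ∧ p₂ = l * r := ⟨p₂ / l, by positivity, by field_simp⟩
  obtain ⟨x, hx0, rfl⟩ : ∃ x, 0 < x ∧ p₁ = l * x := ⟨p₁ / l, by positivity, by field_simp⟩
  obtain rfl : p₃ = l * (1 / r) := by
    field_simp
    exact mul_left_cancel₀ hl0.ne' (by linear_combination -hll)
  have hrs : r * (1 / r) = 1 := mul_one_div_cancel hr0.ne'
  have hr : 1 ≤ r := by
    have hle' := (div_le_iff₀ hr0).1 (le_of_mul_le_mul_left hle hl0)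
    exact (one_le_sq_iff₀ hr0.le).1 (hle'.trans_eq (sq r).symm)
  have hxE : x ≤ E := by
    refine le_of_sq_le_sq (le_of_mul_le_mul_right ?_ (pow_pos hl0 2)) hE
    linear_combination hT₁ + E ^ 2 * l ^ 2 * hrs
  have hrx : r ^ 3 ≤ E ^ 2 * x := by
    refine le_of_mul_le_mul_right ?_ (pow_pos hl0 2)
    linear_combination r * hT₂ + E ^ 2 * x * l ^ 2 * hrs
  have key := h.log_bound_normalized hβ0 hβ1 hQ hx0 hr hrx hxE
  have hs0 : 0 < 1 / r := by positivity
  generalize 1 / r = s at key hs0 ⊢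
  have hfactor : ∀ w, 0 < w → Real.log (l * w) = Real.log l + Real.log w := fun w hw =>
    Real.log_mul hl0.ne' hw.ne'
  rw [show l * x + l * r + β * (l * s) = l * (x + r + β * s) by ring,
    show l * x + β * (l * r) + l * s = l * (x + β * r + s) by ring,
    show β * (l * x) + l * r + l * s = l * (β * x + (r + s)) by ring,
    hfactor _ (by positivity), hfactor _ (by positivity), hfactor _ (by positivity)]
  linear_combination key

end ChildEstimate

section SlopeSigns

variable {β Q Q' E x C y u : ℝ}

/-- The rate at which `logGap` penalises the ratio of two messages; `κ` measures the improvement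
over the rate `2 + β` that Cauchy–Schwarz alone gives back when there are `(2 + β) / (1 - β)`
children. -/
def penalty (β κ : ℝ) : ℝ := 2 + β + (1 - β) * κ

/-- The numerator of `-∂ logGap / ∂x` at `x = r ^ 3 * y`, `C = r + 1 / r`, `u = r ^ 2`, scaled to a
polynomial. -/
def scaledSlopeX (β Q y u : ℝ) : ℝ :=
  4 * ((u ^ 2 * y) ^ 2 + (1 + β) * (u ^ 2 * y) * (u + 1) + β * (u + 1) ^ 2 + (1 - β) ^ 2 * u) *
      ((2 + β) * (u ^ 2 * y) * (u + 1) + (1 + 2 * β) * (u + 1) ^ 2 - 2 * β * (1 - β) * u) -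
    Q * (u - 1) ^ 2 * (2 * (u ^ 2 * y) + (1 + β) * (u + 1)) * (β * (u ^ 2 * y) + (u + 1))

theorem penalty_mono {κ κ' : ℝ} (hβ : β ≤ 1) (h : κ ≤ κ') : penalty β κ ≤ penalty β κ' :=
  add_le_add_right (mul_le_mul_of_nonneg_left h (sub_nonneg.2 hβ)) _

theorem penalty_pos {κ : ℝ} (hβ0 : 0 ≤ β) (hβ1 : β < 1) (hκ : 0 ≤ κ) : 0 < penalty β κ := by
  have : 0 < 1 - β := sub_pos.2 hβ1
  unfold penalty
  positivity

theorem scaledSlopeX_sq {r : ℝ} (hr : r ≠ 0) :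
    scaledSlopeX β Q y (r ^ 2) = logGapSlopeX β Q (r ^ 3 * y) (r + 1 / r) * r ^ 4 := by
  unfold scaledSlopeX logGapSlopeX pairProd
  field_simp
  ring

theorem logGapSlopeC_anti (hβ : 0 ≤ β) (hx : 0 ≤ x) (hC : 0 ≤ C) (hQ : Q ≤ Q') :
    logGapSlopeC β Q' x C ≤ logGapSlopeC β Q x C := by
  unfold logGapSlopeC
  gcongr

theorem scaledSlopeX_anti (hβ : 0 ≤ β) (hy : 0 ≤ y) (hu : 0 ≤ u) (hQ : Q ≤ Q') :
    scaledSlopeX β Q' y u ≤ scaledSlopeX β Q y u := by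
  unfold scaledSlopeX
  gcongr

theorem slopesNonneg_of_scaledSlopeX {v : ℝ} (hv : 0 < v) (hvE : v * E ^ 2 ≤ 1)
    (hC : ∀ c, 2 < c → c < E + 1 / E → 0 ≤ logGapSlopeC β Q E c)
    (hX : ∀ y u, v ≤ y → 1 ≤ u → 0 ≤ scaledSlopeX β Q y u) : SlopesNonneg β Q E := by
  refine ⟨hC, fun r x hr hrx => ?_⟩
  have hr0 : 0 < r := one_pos.trans_le hr
  obtain ⟨y, rfl⟩ : ∃ y, x = r ^ 3 * y := ⟨x / r ^ 3, by field_simp⟩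
  have hEy : 1 ≤ E ^ 2 * y := by
    refine le_of_mul_le_mul_left ?_ (pow_pos hr0 3)
    linear_combination hrx
  have hy : 0 ≤ y := le_of_lt (pos_of_mul_pos_right (one_pos.trans_le hEy) (sq_nonneg E))
  have hvy : v ≤ y :=
    calc v ≤ v * (E ^ 2 * y) := le_mul_of_one_le_right hv.le hEy
      _ = v * E ^ 2 * y := (mul_assoc _ _ _).symm
      _ ≤ y := mul_le_of_le_one_left hy hvE
  have hscaled := hX y (r ^ 2) hvy (one_le_pow₀ hr)
  rw [scaledSlopeX_sq hr0.ne'] at hscaled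
  exact nonneg_of_mul_nonneg_left hscaled (by positivity)

/-! The polynomial inequalities below become expansions with nonnegative coefficients once each
parameter confined to an interval is written as a fraction `t / (1 + t)`; subtracted squares absorb
the negative coefficients that remain. -/

theorem exists_eq_div_one_add (h0 : 0 ≤ x) (h1 : x < 1) : ∃ y, 0 ≤ y ∧ x = y / (1 + y) := by
  have h : 0 < 1 - x := sub_pos.2 h1
  exact ⟨x / (1 - x), by positivity, by field_simp; ring⟩

theorem exists_eq_two_add_mul {c : ℝ} (hE : 1 ≤ E) (hc : 2 < c) (hcE : c < E + 1 / E) :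
    ∃ t, 0 ≤ t ∧ c = 2 + (E - 1) ^ 2 / E * (t / (1 + t)) := by
  have : 0 < E := one_pos.trans_le hE
  have hwidth : E + 1 / E = 2 + (E - 1) ^ 2 / E := by
    field_simp
    ring
  have hw : 0 < (E - 1) ^ 2 / E := by linarith
  obtain ⟨t, ht, h⟩ := exists_eq_div_one_add (x := (c - 2) / ((E - 1) ^ 2 / E))
    (div_nonneg (by linarith) hw.le) ((div_lt_one hw).2 (by linarith))
  exact ⟨t, ht, by rw [← h, mul_div_cancel₀ _ hw.ne']; ring⟩

set_option maxRecDepth 4000 in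
theorem logGapSlopeC_nonneg_of_lt_two {c : ℝ} (hβ0 : 0 ≤ β) (hβ1 : β < 1) (hE1 : 1 ≤ E)
    (hE2 : E < 2) (hc : 2 < c) (hcE : c < E + 1 / E) :
    0 ≤ logGapSlopeC β (penalty β (1 + 17 / 8 * (E - 1))) E c := by
  obtain ⟨t, ht, rfl⟩ := exists_eq_two_add_mul hE1 hc hcE
  obtain ⟨x, hx, hxE⟩ := exists_eq_div_one_add (x := E - 1) (by linarith) (by linarith)
  obtain rfl : E = 1 + x / (1 + x) := by linarith
  obtain ⟨b, hb, rfl⟩ := exists_eq_div_one_add hβ0 hβ1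
  clear hc hcE hxE hE1 hE2 hβ0 hβ1
  rw [add_sub_cancel_left]
  unfold logGapSlopeC pairProd penalty
  field_simp
  ring_nf
  positivity

set_option maxRecDepth 4000 in
theorem logGapSlopeC_nonneg_of_two_le {c : ℝ} (hβ0 : 0 ≤ β) (hβ1 : β < 1) (hE : 2 ≤ E)
    (hc : 2 < c) (hcE : c < E + 1 / E) :
    0 ≤ logGapSlopeC β (penalty β (25 / 8 + 17 / 4 * β)) E c := by
  obtain ⟨t, ht, rfl⟩ := exists_eq_two_add_mul (one_le_two.trans hE) hc hcE
  obtain ⟨x, hx, rfl⟩ := exists_nonneg_add_of_le hE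
  obtain ⟨b, hb, rfl⟩ := exists_eq_div_one_add hβ0 hβ1
  clear hc hcE hE hβ0 hβ1
  unfold logGapSlopeC pairProd penalty
  rw [show 2 + x - 1 = 1 + x by ring]
  field_simp
  ring_nf
  positivity

set_option maxRecDepth 4000 in
theorem scaledSlopeX_nonneg_of_eighth_le (hβ0 : 0 ≤ β) (hβ1 : β < 1) (hy : 1 / 8 ≤ y)
    (hu : 1 ≤ u) : 0 ≤ scaledSlopeX β (penalty β (25 / 8 + 17 / 4 * β)) y u := by
  obtain ⟨w, hw, rfl⟩ := exists_nonneg_add_of_le hy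
  obtain ⟨t, ht, rfl⟩ := exists_nonneg_add_of_le hu
  obtain ⟨b, hb, rfl⟩ := exists_eq_div_one_add hβ0 hβ1
  clear hy hu hβ0 hβ1
  unfold scaledSlopeX penalty
  field_simp
  ring_nf
  positivity

set_option maxRecDepth 4000 in
theorem scaledSlopeX_nonneg_of_quarter_le (hβ0 : 1 / 4 ≤ β) (hβ1 : β < 1) (hy : 4 / 81 ≤ y)
    (hu : 1 ≤ u) : 0 ≤ scaledSlopeX β (penalty β (25 / 8 + 17 / 4 * β)) y u := by
  obtain ⟨s, hs, rfl⟩ : ∃ s, 0 ≤ s ∧ β = (1 / 4 + s) / (1 + s) := by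
    have h : 0 < 1 - β := sub_pos.2 hβ1
    exact ⟨(β - 1 / 4) / (1 - β), div_nonneg (by linarith) h.le, by field_simp; ring⟩
  obtain ⟨w, hw, rfl⟩ := exists_nonneg_add_of_le hy
  obtain ⟨t, ht, rfl⟩ := exists_nonneg_add_of_le hu
  clear hy hu hβ0 hβ1
  have hsquares : 0 ≤ (11 / 250 * t ^ 2 * (t ^ 2 - 31) ^ 2 + 1 / 5 * t * (t ^ 2 - 20) ^ 2 +
      s * t ^ 3 * (t - 1) ^ 2) / (1 + s) ^ 4 := by positivity
  refine hsquares.trans ?_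
  unfold scaledSlopeX penalty
  rw [← sub_nonneg]
  field_simp
  ring_nf
  positivity

set_option maxRecDepth 4000 in
theorem scaledSlopeX_nonneg_of_two_div_le (hβ0 : 0 ≤ β) (hβ1 : β < 1) (hy : 2 / 25 ≤ y)
    (hu : 1 ≤ u) : 0 ≤ scaledSlopeX β (penalty β (3 + β)) y u := by
  obtain ⟨w, hw, rfl⟩ := exists_nonneg_add_of_le hy
  obtain ⟨t, ht, rfl⟩ := exists_nonneg_add_of_le hu
  obtain ⟨b, hb, rfl⟩ := exists_eq_div_one_add hβ0 hβ1
  clear hy hu hβ0 hβ1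
  have hsquares : 0 ≤ (109 / 1000 * t ^ 2 * (t ^ 2 - 13) ^ 2 + 6 / 25 * t * (t ^ 2 - 11) ^ 2) /
      (1 + b) ^ 4 := by positivity
  refine hsquares.trans ?_
  unfold scaledSlopeX penalty
  rw [← sub_nonneg]
  field_simp
  ring_nf
  positivity

theorem slopesNonneg_of_lt_two (hβ0 : 0 ≤ β) (hβ1 : β < 1) (hE1 : 1 ≤ E) (hE2 : E < 2) :
    SlopesNonneg β (penalty β (1 + 17 / 8 * (E - 1))) E :=
  slopesNonneg_of_scaledSlopeX (v := 1 / 8) (by norm_num) (by nlinarith)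
    (fun _ => logGapSlopeC_nonneg_of_lt_two hβ0 hβ1 hE1 hE2) fun _ _ hy hu =>
      (scaledSlopeX_nonneg_of_eighth_le hβ0 hβ1 hy hu).trans
        (scaledSlopeX_anti hβ0 (by linarith) (by linarith) (penalty_mono hβ1.le (by linarith)))

theorem slopesNonneg_of_le_two_add (hβ0 : 0 ≤ β) (hβ1 : β < 1) (hE1 : 2 ≤ E)
    (hE2 : E ≤ 2 + 2 * β) : SlopesNonneg β (penalty β (25 / 8 + 17 / 4 * β)) E := by
  have hC := fun c => logGapSlopeC_nonneg_of_two_le (c := c) hβ0 hβ1 hE1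
  rcases le_total β (1 / 4) with h | h
  · exact slopesNonneg_of_scaledSlopeX (v := 1 / 8) (by norm_num) (by nlinarith) hC
      fun _ _ => scaledSlopeX_nonneg_of_eighth_le hβ0 hβ1
  · exact slopesNonneg_of_scaledSlopeX (v := 4 / 81) (by norm_num) (by nlinarith) hC
      fun _ _ => scaledSlopeX_nonneg_of_quarter_le h hβ1

theorem slopesNonneg_of_le_seven_halves (hβ0 : 0 ≤ β) (hβ1 : β < 1) (hE1 : 2 ≤ E)
    (hE2 : E ≤ 7 / 2 ∨ 1 / 4 ≤ β ∧ E ≤ 9 / 2) : SlopesNonneg β (penalty β (3 + β)) E := by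
  have hQ : penalty β (3 + β) ≤ penalty β (25 / 8 + 17 / 4 * β) :=
    penalty_mono hβ1.le (by linarith)
  have hC : ∀ c, 2 < c → c < E + 1 / E → 0 ≤ logGapSlopeC β (penalty β (3 + β)) E c :=
    fun c hc hcE => (logGapSlopeC_nonneg_of_two_le hβ0 hβ1 hE1 hc hcE).trans
      (logGapSlopeC_anti hβ0 (by linarith) (by linarith) hQ)
  rcases hE2 with hE2 | ⟨hβ, hE2⟩
  · exact slopesNonneg_of_scaledSlopeX (v := 2 / 25) (by norm_num) (by nlinarith) hC
      fun _ _ => scaledSlopeX_nonneg_of_two_div_le hβ0 hβ1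
  · exact slopesNonneg_of_scaledSlopeX (v := 4 / 81) (by norm_num) (by nlinarith) hC
      fun _ _ hy hu => (scaledSlopeX_nonneg_of_quarter_le hβ hβ1 hy hu).trans
        (scaledSlopeX_anti hβ0 (by linarith) (by linarith) hQ)

end SlopeSigns

section Balanced

/-- A positive weight vector on three colours is balanced at level `E` if the square of each weight
is at most `E ^ 2` times the product of the other two; level `1` means uniform weights. -/
structure IsBalanced (E : ℝ) (p : Fin 3 → ℝ) : Prop where
  pos : ∀ c, 0 < p c
  sq_le : ∀ i j k, i ≠ j → j ≠ k → i ≠ k → p i ^ 2 ≤ E ^ 2 * (p j * p k)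

variable {ι : Type*} [Fintype ι] {β E k : ℝ} {p : Fin 3 → ℝ} {P : ι → Fin 3 → ℝ}

theorem edgeMsg_eq (β : ℝ) (p : Fin 3 → ℝ) {i j k : Fin 3} (hij : i ≠ j) (hjk : j ≠ k)
    (hik : i ≠ k) : edgeMsg β p i = β * p i + p j + p k := by
  have huniv : (Finset.univ : Finset (Fin 3)) = {i, j, k} := by
    revert i j k
    decide
  rw [edgeMsg, huniv, Finset.sum_insert (by simp [hij, hik]), Finset.sum_pair hjk]
  ring

theorem isBalanced_edgeMsg (hpos : ∀ c, 0 < edgeMsg β p c)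
    (h : ∀ i j l, i ≠ j → j ≠ l → i ≠ l → (β * p i + p j + p l) ^ 2 ≤
      k ^ 2 * ((p i + β * p j + p l) * (p i + p j + β * p l))) :
    IsBalanced k (edgeMsg β p) := by
  refine ⟨hpos, fun i j l hij hjl hil => ?_⟩
  rw [edgeMsg_eq β p hij hjl hil, edgeMsg_eq β p hij.symm hil hjl,
    edgeMsg_eq β p hil.symm hij hjl.symm]
  linear_combination h i j l hij hjl hil

theorem IsBalanced.mono {E' : ℝ} (h : IsBalanced E p) (hE : 0 ≤ E) (hE' : E ≤ E') :
    IsBalanced E' p := by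
  refine ⟨h.pos, fun i j k hij hjk hik => (h.sq_le i j k hij hjk hik).trans ?_⟩
  have := h.pos j
  have := h.pos k
  gcongr

theorem IsBalanced.le_mul (h : IsBalanced E p) (hE : 1 ≤ E) (i j : Fin 3) :
    p i ≤ E ^ 2 * p j := by
  have hE2 : 1 ≤ E ^ 2 := one_le_pow₀ hE
  rcases eq_or_ne i j with rfl | hij
  · exact le_mul_of_one_le_left (h.pos i).le hE2
  obtain ⟨k, hjk, hik⟩ : ∃ k, j ≠ k ∧ i ≠ k := by
    revert i j
    decide
  have hi := h.pos i
  have hj := h.pos j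
  have hk := h.pos k
  rcases le_total (p k) (p i) with hki | hik'
  · refine le_of_mul_le_mul_left ?_ hi
    calc p i * p i = p i ^ 2 := (sq _).symm
      _ ≤ E ^ 2 * (p j * p k) := h.sq_le i j k hij hjk hik
      _ ≤ E ^ 2 * (p j * p i) := by gcongr
      _ = p i * (E ^ 2 * p j) := by ring
  · refine hik'.trans (le_of_mul_le_mul_left ?_ hk)
    calc p k * p k = p k ^ 2 := (sq _).symm
      _ ≤ E ^ 2 * (p i * p j) := h.sq_le k i j hik.symm hij hjk.symm
      _ ≤ E ^ 2 * (p k * p j) := by gcongr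
      _ = p k * (E ^ 2 * p j) := by ring

theorem isBalanced_treeStep (hk : 0 ≤ k) (hkE : k ^ Fintype.card ι ≤ E)
    (h : ∀ a, IsBalanced k (edgeMsg β (P a))) : IsBalanced E (treeStep β P) := by
  have hpos : ∀ c, 0 < treeStep β P c := fun c => Finset.prod_pos fun a _ => (h a).pos c
  refine ⟨hpos, fun i j l hij hjl hil => ?_⟩
  calc treeStep β P i ^ 2 = ∏ a, edgeMsg β (P a) i ^ 2 := (Finset.prod_pow _ _ _).symm
    _ ≤ ∏ a, k ^ 2 * (edgeMsg β (P a) j * edgeMsg β (P a) l) :=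
        Finset.prod_le_prod (fun a _ => sq_nonneg _) fun a _ => (h a).sq_le i j l hij hjl hil
    _ = (k ^ Fintype.card ι) ^ 2 * (treeStep β P j * treeStep β P l) := by
        rw [Finset.prod_mul_distrib, Finset.prod_mul_distrib, Finset.prod_const, Finset.card_univ,
          pow_right_comm, treeStep, treeStep]
    _ ≤ E ^ 2 * (treeStep β P j * treeStep β P l) := by
        have := mul_pos (hpos j) (hpos l)
        gcongr

theorem IsBalanced.edgeMsg_pos (hβ : 0 < β) (h : IsBalanced E p) (c : Fin 3) :
    0 < edgeMsg β p c :=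
  _root_.edgeMsg_pos hβ (fun c => (h.pos c).le) ⟨0, h.pos 0⟩ c

theorem IsBalanced.log_edgeMsg_bound {Q : ℝ} (h : IsBalanced E p) (hQ : SlopesNonneg β Q E)
    (hβ0 : 0 ≤ β) (hβ1 : β < 1) (hQ0 : 0 ≤ Q) (hE : 0 ≤ E) {i j k : Fin 3} (hij : i ≠ j)
    (hjk : j ≠ k) (hik : i ≠ k) :
    Q * (Real.log (edgeMsg β p k) - Real.log (edgeMsg β p j)) ^ 2 ≤
      4 * (1 - β) * (2 * Real.log ((E + 1 + β) / (β * E + 2)) + 2 * Real.log (edgeMsg β p i) -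
        Real.log (edgeMsg β p j) - Real.log (edgeMsg β p k)) := by
  have key := hQ.log_bound hβ0 hβ1 hQ0 hE (h.pos i) (h.pos j) (h.pos k) (h.sq_le i j k hij hjk hik)
    (h.sq_le j i k hij.symm hik hjk) (h.sq_le k i j hik.symm hij hjk.symm)
  rwa [edgeMsg_eq β p hij hjk hik, edgeMsg_eq β p hij.symm hik hjk,
    edgeMsg_eq β p hik.symm hij hjk.symm, add_assoc (β * p k), add_comm (β * p k),
    add_comm (β * p j)]

/-- Cauchy–Schwarz over the children loses the factor `card ι * (1 - β)`, which the degree condition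
bounds by `2 + β`. -/
theorem log_treeStep_bound {Q : ℝ} (hQ : SlopesNonneg β Q E) (hβ0 : 0 < β) (hβ1 : β < 1)
    (hQ0 : 0 ≤ Q) (hE : 0 ≤ E) (hd : Fintype.card ι * (1 - β) ≤ 2 + β)
    (hP : ∀ a, IsBalanced E (P a)) {i j k : Fin 3} (hij : i ≠ j) (hjk : j ≠ k) (hik : i ≠ k) :
    Q * (Real.log (treeStep β P k) - Real.log (treeStep β P j)) ^ 2 ≤
      4 * (2 + β) * (2 * (Fintype.card ι * Real.log ((E + 1 + β) / (β * E + 2))) +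
        2 * Real.log (treeStep β P i) - Real.log (treeStep β P j) - Real.log (treeStep β P k)) := by
  have hlog : ∀ c, Real.log (treeStep β P c) = ∑ a, Real.log (edgeMsg β (P a) c) := fun c =>
    Real.log_prod fun a _ => ((hP a).edgeMsg_pos hβ0 c).ne'
  have : 0 < 1 - β := sub_pos.2 hβ1
  set L : Fin 3 → ι → ℝ := fun c a => Real.log (edgeMsg β (P a) c)
  set l := Real.log ((E + 1 + β) / (β * E + 2))
  set G := 2 * (Fintype.card ι * l) + 2 * ∑ a, L i a - ∑ a, L j a - ∑ a, L k a with hG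
  have hsum : Q * ∑ a, (L k a - L j a) ^ 2 ≤ 4 * (1 - β) * G := by
    have hG' : G = ∑ a, (2 * l + 2 * L i a - L j a - L k a) := by
      simp only [hG, Finset.sum_sub_distrib, Finset.sum_add_distrib, ← Finset.mul_sum,
        Finset.sum_const, Finset.card_univ, nsmul_eq_mul, mul_left_comm]
    rw [hG', Finset.mul_sum, Finset.mul_sum]
    exact Finset.sum_le_sum fun a _ =>
      (hP a).log_edgeMsg_bound hQ hβ0.le hβ1 hQ0 hE hij hjk hik
  have hG0 : 0 ≤ G := by
    refine nonneg_of_mul_nonneg_right (le_trans ?_ hsum) (by positivity)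
    exact mul_nonneg hQ0 (Finset.sum_nonneg fun a _ => sq_nonneg _)
  have hCS : (∑ a, (L k a - L j a)) ^ 2 ≤ Fintype.card ι * ∑ a, (L k a - L j a) ^ 2 :=
    sq_sum_le_card_mul_sum_sq
  rw [hlog, hlog, hlog, ← Finset.sum_sub_distrib]
  calc Q * (∑ a, (L k a - L j a)) ^ 2
      ≤ Q * (Fintype.card ι * ∑ a, (L k a - L j a) ^ 2) := by gcongr
    _ = Fintype.card ι * (Q * ∑ a, (L k a - L j a) ^ 2) := by ring
    _ ≤ Fintype.card ι * (4 * (1 - β) * G) := by gcongr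
    _ = 4 * (Fintype.card ι * (1 - β)) * G := by ring
    _ ≤ 4 * (2 + β) * G := by gcongr

theorem neg_log_le_log_sub_log_sq {a b : ℝ} (ha : 0 < a) (hb : 0 < b) :
    -Real.log (4 * a * b / (a + b) ^ 2) ≤ (Real.log b - Real.log a) ^ 2 / 4 := by
  set t := Real.log b - Real.log a with ht
  have hcosh : Real.cosh (t / 2) ^ 2 = (4 * a * b / (a + b) ^ 2)⁻¹ := by
    have htwo := Real.cosh_two_mul (t / 2)
    rw [Real.sinh_sq, mul_div_cancel₀ _ two_ne_zero, ht, ← Real.log_div hb.ne' ha.ne',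
      Real.cosh_log (by positivity), Real.log_div hb.ne' ha.ne', ← ht] at htwo
    have hsq : Real.cosh (t / 2) ^ 2 = ((b / a + (b / a)⁻¹) / 2 + 1) / 2 := by linarith
    rw [hsq]
    field_simp
    ring
  rw [← Real.log_inv, ← hcosh, Real.log_le_iff_le_exp (by positivity)]
  calc Real.cosh (t / 2) ^ 2 ≤ Real.exp ((t / 2) ^ 2 / 2) ^ 2 := by
        have := (Real.cosh_pos (t / 2)).le
        gcongr
        exact Real.cosh_le_exp_half_sq _
    _ = Real.exp (t ^ 2 / 4) := by rw [← Real.exp_nat_mul]; ring_nf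

/-- The inequality to be proved at a parent whose weights have mean ratio `y = 2 x₁ / (x₂ + x₃)` and
dispersion `T = ((x₃ - x₂) / (x₂ + x₃)) ^ 2`. -/
def ParentIneq (β k y T : ℝ) : Prop :=
  (β * y + 2) ^ 2 ≤ k ^ 2 * ((y + 1 + β) ^ 2 - (1 - β) ^ 2 * T)

/-- The constraint on the mean ratio `y` and the dispersion `T` that `log_treeStep_bound` leaves
when the penalty is `penalty β κ`. -/
def ParentConstraint (β κ ρ y T : ℝ) : Prop :=
  1 ≤ y * (ρ * (1 - T) ^ (κ * (1 - β) / (2 * (2 + β))))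

section Parent

variable {κ ρ x₁ x₂ x₃ : ℝ}

theorem ParentIneq.sq_le (h₁ : 0 < x₂ + x₃)
    (h : ParentIneq β k (2 * x₁ / (x₂ + x₃)) ((x₃ - x₂) ^ 2 / (x₂ + x₃) ^ 2)) :
    (β * x₁ + x₂ + x₃) ^ 2 ≤ k ^ 2 * ((x₁ + β * x₂ + x₃) * (x₁ + x₂ + β * x₃)) := by
  have hscaled := mul_le_mul_of_nonneg_right h (sq_nonneg ((x₂ + x₃) / 2))
  have hleft : (β * (2 * x₁ / (x₂ + x₃)) + 2) ^ 2 * ((x₂ + x₃) / 2) ^ 2 =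
      (β * x₁ + x₂ + x₃) ^ 2 := by
    field_simp
    ring
  have hright : ((2 * x₁ / (x₂ + x₃) + 1 + β) ^ 2 -
        (1 - β) ^ 2 * ((x₃ - x₂) ^ 2 / (x₂ + x₃) ^ 2)) * ((x₂ + x₃) / 2) ^ 2 =
      (x₁ + β * x₂ + x₃) * (x₁ + x₂ + β * x₃) := by
    field_simp
    ring
  rwa [hleft, mul_assoc, hright] at hscaled

theorem parentConstraint_of_log_bound (hβ0 : 0 ≤ β) (hβ1 : β < 1) (hκ : 0 ≤ κ) (hρ : 0 < ρ)
    (h₁ : 0 < x₁) (h₂ : 0 < x₂) (h₃ : 0 < x₃)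
    (h : penalty β κ * (Real.log x₃ - Real.log x₂) ^ 2 ≤
      4 * (2 + β) * (2 * Real.log ρ + 2 * Real.log x₁ - Real.log x₂ - Real.log x₃)) :
    ParentConstraint β κ ρ (2 * x₁ / (x₂ + x₃)) ((x₃ - x₂) ^ 2 / (x₂ + x₃) ^ 2) := by
  have hT : 1 - (x₃ - x₂) ^ 2 / (x₂ + x₃) ^ 2 = 4 * x₂ * x₃ / (x₂ + x₃) ^ 2 := by
    field_simp
    ring
  have hlog := neg_log_le_log_sub_log_sq h₂ h₃
  have hlogT : Real.log (4 * x₂ * x₃ / (x₂ + x₃) ^ 2) =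
      2 * Real.log 2 + Real.log x₂ + Real.log x₃ - 2 * Real.log (x₂ + x₃) := by
    rw [Real.log_div (by positivity) (by positivity), Real.log_mul (by positivity) h₃.ne',
      Real.log_mul (by positivity) h₂.ne', Real.log_pow, show (4 : ℝ) = 2 ^ 2 by norm_num,
      Real.log_pow]
    push_cast
    ring
  have hlogy : Real.log (2 * x₁ / (x₂ + x₃)) =
      Real.log 2 + Real.log x₁ - Real.log (x₂ + x₃) := by
    rw [Real.log_div (by positivity) (by positivity), Real.log_mul two_ne_zero h₁.ne']
  have hT0 : 0 < 4 * x₂ * x₃ / (x₂ + x₃) ^ 2 := by positivity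
  have hy0 : 0 < 2 * x₁ / (x₂ + x₃) := by positivity
  have hmain := mul_le_mul_of_nonneg_left hlog (penalty_pos hβ0 hβ1 hκ).le
  have hw := Real.rpow_pos_of_pos hT0 (κ * (1 - β) / (2 * (2 + β)))
  rw [ParentConstraint, hT, ← Real.log_nonneg_iff (mul_pos hy0 (mul_pos hρ hw)),
    Real.log_mul hy0.ne' (mul_pos hρ hw).ne', Real.log_mul hρ.ne' hw.ne', Real.log_rpow hT0]
  generalize Real.log (4 * x₂ * x₃ / (x₂ + x₃) ^ 2) = t at hmain hlogT ⊢
  refine nonneg_of_mul_nonneg_right (a := 2 * (2 + β)) ?_ (by positivity)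
  have hcancel : 2 * (2 + β) * (κ * (1 - β) / (2 * (2 + β)) * t) = κ * (1 - β) * t := by
    field_simp
  rw [hlogy]
  unfold penalty at h hmain
  linear_combination hmain + h / 4 + (2 + β) * hlogT - hcancel

theorem isBalanced_edgeMsg_treeStep (hβ0 : 0 < β) (hβ1 : β < 1)
    (hd : Fintype.card ι * (1 - β) ≤ 2 + β) (hκ : 0 ≤ κ) (hE : 0 ≤ E)
    (hQ : SlopesNonneg β (penalty β κ) E) (hρ0 : 0 < ρ)
    (hρ : Fintype.card ι * Real.log ((E + 1 + β) / (β * E + 2)) ≤ Real.log ρ)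
    (hineq : ∀ y T, 0 < y → 0 ≤ T → T < 1 → ParentConstraint β κ ρ y T → ParentIneq β k y T)
    (hP : ∀ a, IsBalanced E (P a)) : IsBalanced k (edgeMsg β (treeStep β P)) := by
  have hpos : ∀ c, 0 < treeStep β P c := fun c =>
    Finset.prod_pos fun a _ => (hP a).edgeMsg_pos hβ0 c
  refine isBalanced_edgeMsg
    (edgeMsg_pos hβ0 (fun c => (hpos c).le) ⟨0, hpos 0⟩) fun i j l hij hjl hil => ?_
  have h₁ := hpos i
  have h₂ := hpos j
  have h₃ := hpos l
  have hlog := log_treeStep_bound hQ hβ0 hβ1 (penalty_pos hβ0.le hβ1 hκ).le hE hd hP hij hjl hil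
  refine (hineq _ _ (by positivity) (by positivity) ?_ ?_).sq_le (by positivity)
  · rw [div_lt_one (by positivity)]
    nlinarith
  · refine parentConstraint_of_log_bound hβ0.le hβ1 hκ hρ0 h₁ h₂ h₃ (hlog.trans ?_)
    gcongr

end Parent

end Balanced

section CrudeQuadratic

/-- Completing the square at `y = 29/100 - 13/100 β` leaves an expression linear in `y` whose two
coefficients are polynomials, positive over the whole range of `s`. -/
theorem crude_quadratic {β s y : ℝ} (hβ0 : 0 ≤ β) (hβ1 : β < 1)
    (hs0 : 141 / 100 + 58 / 100 * β ≤ s) (hs1 : s < 22 / 10 + 75 / 100 * β) (hy : 0 ≤ y) :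
    2 * (2 + β) * (2 * s + β) ^ 2 *
        ((201 / 200 * s ^ 2 + 1) * ((137 / 100 + 62 / 100 * β) ^ 2 * y + 1) -
          4 * (137 / 100 + 62 / 100 * β)) ≤
      (3 + β) * (201 / 200 * s ^ 2 + 1) *
        (((2 * s * (1 + β) - β) * y - (4 + β - 2 * s)) *
          ((2 * s * (1 + β ^ 2) + 3 * β - β ^ 2) * y +
            (4 - β + β ^ 2 + 2 * s * (1 + 3 * β)))) := by
  have hwidth : 0 < 79 / 100 + 17 / 100 * β := by positivity
  have hsquare : 0 ≤ (3 + β) * (201 / 200 * s ^ 2 + 1) *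
      ((2 * s * (1 + β) - β) * (2 * s * (1 + β ^ 2) + 3 * β - β ^ 2)) *
        (y - (29 / 100 - 13 / 100 * β)) ^ 2 := by
    have : 0 ≤ 2 * s * (1 + β) - β := by nlinarith
    have : 0 ≤ 2 * s * (1 + β ^ 2) + 3 * β - β ^ 2 := by nlinarith
    positivity
  refine sub_nonneg.1 (hsquare.trans ?_)
  clear hsquare
  obtain ⟨t, ht, rfl⟩ : ∃ t, 0 ≤ t ∧
      s = 141 / 100 + 58 / 100 * β + (79 / 100 + 17 / 100 * β) * (t / (1 + t)) := by
    obtain ⟨t, ht, h⟩ := exists_eq_div_one_add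
      (x := (s - (141 / 100 + 58 / 100 * β)) / (79 / 100 + 17 / 100 * β))
      (div_nonneg (by linarith) hwidth.le) ((div_lt_one hwidth).2 (by linarith))
    exact ⟨t, ht, by rw [← h]; field_simp; ring⟩
  obtain ⟨b, hb, rfl⟩ := exists_eq_div_one_add hβ0 hβ1
  clear hwidth hs0 hs1 hβ0 hβ1
  rw [← sub_nonneg]
  field_simp
  ring_nf
  positivity

end CrudeQuadratic

section ParentInequality

variable {β κ ρ k y T : ℝ}

theorem one_sub_rpow_mul_le {a : ℝ} (hT1 : T < 1) (ha : 0 ≤ a) :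
    (1 - T) ^ a * (1 + a * T) ≤ 1 := by
  have hlog : Real.log (1 - T) * a ≤ -(a * T) := by
    have := mul_le_mul_of_nonneg_right (Real.log_le_sub_one_of_pos (sub_pos.2 hT1)) ha
    linarith
  calc (1 - T) ^ a * (1 + a * T) = Real.exp (Real.log (1 - T) * a) * (1 + a * T) := by
        rw [Real.rpow_def_of_pos (sub_pos.2 hT1)]
    _ ≤ Real.exp (Real.log (1 - T) * a) * Real.exp (a * T) := by
        gcongr
        linarith [Real.add_one_le_exp (a * T)]
    _ ≤ Real.exp (-(a * T)) * Real.exp (a * T) := by gcongr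
    _ = 1 := by rw [← Real.exp_add, neg_add_cancel, Real.exp_zero]

theorem ParentConstraint.one_add_le_mul (h : ParentConstraint β κ ρ y T) (hβ0 : 0 ≤ β)
    (hβ1 : β < 1) (hκ : 0 ≤ κ) (hρ : 0 ≤ ρ) (hy : 0 ≤ y) (hT0 : 0 ≤ T) (hT1 : T < 1) :
    1 + κ * (1 - β) / (2 * (2 + β)) * T ≤ ρ * y := by
  have := sub_pos.2 hβ1
  unfold ParentConstraint at h
  set a := κ * (1 - β) / (2 * (2 + β))
  have ha : 0 ≤ a := by positivity
  calc 1 + a * T ≤ (y * (ρ * (1 - T) ^ a)) * (1 + a * T) :=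
        le_mul_of_one_le_left (by positivity) h
    _ = ρ * y * ((1 - T) ^ a * (1 + a * T)) := by ring
    _ ≤ ρ * y := mul_le_of_le_one_right (by positivity) (one_sub_rpow_mul_le hT1 ha)

/-- Equality holds at `y = z`, `T = 0`, and to first order in `y - z` the hypothesis on `D` pays for
the dispersion. -/
theorem parentIneq_of_le {z D : ℝ} (hβ0 : 0 ≤ β) (hβ1 : β < 1) (hz : 0 < z) (hk0 : 0 ≤ k)
    (hk : k * (z + 1 + β) = β * z + 2)
    (hT : k * (1 - β) * T ≤ 2 * (2 + β) * D) : ParentIneq β k (z + D) T := by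
  have := sub_pos.2 hβ1
  have hkb : (k - β) * (z + 1 + β) = (1 - β) * (2 + β) := by linear_combination hk
  have hkβ : 0 < k - β :=
    pos_of_mul_pos_left (by rw [hkb]; positivity) (by positivity : 0 ≤ z + 1 + β)
  have hexpand : k ^ 2 * ((z + D + 1 + β) ^ 2 - (1 - β) ^ 2 * T) - (β * (z + D) + 2) ^ 2 =
      (k - β) * (k + β) * D ^ 2 +
        k * (1 - β) * (2 * (2 + β) * D - k * (1 - β) * T) := by
    linear_combination (k * (z + 1 + β) + β * z + 2 + 2 * k * D - 2 * D * (k - β)) * hk +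
      2 * k * D * hkb
  rw [ParentIneq, ← sub_nonneg, hexpand]
  have := sub_nonneg.2 hT
  positivity

theorem ParentConstraint.parentIneq_fine (h : ParentConstraint β κ ρ y T) (hβ0 : 0 ≤ β)
    (hβ1 : β < 1) (hκ : 0 ≤ κ) (hρ : 0 < ρ) (hk0 : 0 ≤ k)
    (hk : k * (1 + (1 + β) * ρ) = β + 2 * ρ) (hkκ : k * ρ ≤ κ) (hy : 0 < y) (hT0 : 0 ≤ T)
    (hT1 : T < 1) : ParentIneq β k y T := by
  have := sub_pos.2 hβ1
  have hbound := h.one_add_le_mul hβ0 hβ1 hκ hρ.le hy.le hT0 hT1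
  rw [div_mul_eq_mul_div, ← le_sub_iff_add_le', div_le_iff₀ (by positivity)] at hbound
  have hD : κ * (1 - β) * T ≤ 2 * (2 + β) * (ρ * (y - 1 / ρ)) := by
    rw [mul_sub ρ, mul_one_div_cancel hρ.ne']
    linarith
  rw [← add_sub_cancel (1 / ρ) y]
  refine parentIneq_of_le hβ0 hβ1 (by positivity) hk0 ?_ ?_
  · field_simp
    linear_combination hk
  · refine le_of_mul_le_mul_right ?_ hρ
    calc k * (1 - β) * T * ρ = k * ρ * ((1 - β) * T) := by ring
      _ ≤ κ * ((1 - β) * T) := by gcongr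
      _ ≤ 2 * (2 + β) * (y - 1 / ρ) * ρ := by linarith

theorem four_mul_le_of_one_le_mul {G m w : ℝ} (hG : 0 < G) (hw : 0 ≤ w)
    (h : 1 ≤ y * ((G / 2) ^ 2 * w)) : 4 * m ≤ G * (m ^ 2 * y + w) := by
  have hw' : 0 < w := hw.lt_of_ne fun h0 => by
    rw [← h0] at h
    norm_num at h
  refine le_of_mul_le_mul_right ?_ (mul_pos hG hw')
  linarith [sq_nonneg (2 * m - G * w), mul_le_mul_of_nonneg_left h (sq_nonneg m)]

theorem ParentConstraint.dispersion_le {G : ℝ} (m : ℝ)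
    (h : ParentConstraint β (3 + β) ((G / 2) ^ 2) y T) (hβ0 : 0 ≤ β) (hβ1 : β < 1) (hG : 0 < G)
    (hy : 0 ≤ y) (hT1 : T < 1) :
    (3 + β) * (G * ((1 - β) * T)) ≤ 2 * (2 + β) * (G * (m ^ 2 * y + 1) - 4 * m) := by
  have hb := sub_pos.2 hβ1
  unfold ParentConstraint at h
  set a := (3 + β) * (1 - β) / (2 * (2 + β)) with ha_def
  have ha0 : 0 ≤ a := by positivity
  have ha1 : a ≤ 1 := by
    rw [ha_def, div_le_one (by positivity)]
    nlinarith
  have hbernoulli : (1 - T) ^ a ≤ 1 - a * T := by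
    have := rpow_one_add_le_one_add_mul_self (s := -T) (by linarith) ha0 ha1
    rwa [mul_neg, ← sub_eq_add_neg, ← sub_eq_add_neg] at this
  have hw : 0 ≤ 1 - a * T := (Real.rpow_nonneg (sub_pos.2 hT1).le _).trans hbernoulli
  have htangent := four_mul_le_of_one_le_mul (m := m) hG hw (h.trans (by gcongr))
  have haT : 2 * (2 + β) * (a * T) = (3 + β) * ((1 - β) * T) := by
    rw [ha_def]
    field_simp
  linear_combination G * haT.symm + 2 * (2 + β) * htangent

theorem ParentConstraint.parentIneq_crude {s : ℝ} (hβ0 : 0 ≤ β) (hβ1 : β < 1)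
    (hs0 : 141 / 100 + 58 / 100 * β ≤ s) (hs1 : s < 22 / 10 + 75 / 100 * β) (hy : 0 < y)
    (hT1 : T < 1)
    (h : ParentConstraint β (3 + β) (((201 / 200 * s ^ 2 + 1) / 2) ^ 2) y T) :
    ParentIneq β ((2 * s + β) / (2 - β + 2 * β * s)) y T := by
  have hb := sub_pos.2 hβ1
  have hden : 0 < 2 - β + 2 * β * s := by nlinarith
  have hG : 0 < 201 / 200 * s ^ 2 + 1 := by positivity
  have hdisp := h.dispersion_le (137 / 100 + 62 / 100 * β) hβ0 hβ1 hG hy.le hT1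
  have hquad := crude_quadratic hβ0 hβ1 hs0 hs1 hy.le
  have hfactor : (2 * s + β) ^ 2 * ((y + 1 + β) ^ 2 - (1 - β) ^ 2 * T) -
      (β * y + 2) ^ 2 * (2 - β + 2 * β * s) ^ 2 = (1 - β) *
        (((2 * s * (1 + β) - β) * y - (4 + β - 2 * s)) *
          ((2 * s * (1 + β ^ 2) + 3 * β - β ^ 2) * y +
            (4 - β + β ^ 2 + 2 * s * (1 + 3 * β))) - (2 * s + β) ^ 2 * ((1 - β) * T)) := by
    ring
  rw [ParentIneq, div_pow, div_mul_eq_mul_div, le_div_iff₀ (by positivity), ← sub_nonneg, hfactor]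
  refine mul_nonneg hb.le (nonneg_of_mul_nonneg_right (a := (3 + β) * (201 / 200 * s ^ 2 + 1)) ?_
    (by positivity))
  have hscaled := mul_le_mul_of_nonneg_left hdisp (sq_nonneg (2 * s + β))
  linarith

end ParentInequality

section LogMap

variable {β : ℝ}

/-- The one-dimensional recursion `a ↦ D * log ((exp a + 1 + β) / (β * exp a + 2))` that governs the
contraction of balanced levels on the logarithmic scale; `D = (2 + β) / (1 - β)` is the largest
number of children allowed by the degree condition. -/
noncomputable def logMap (β a : ℝ) : ℝ :=
  (2 + β) / (1 - β) * (Real.log (Real.exp a + 1 + β) - Real.log (β * Real.exp a + 2))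

/-- The derivative of `logMap β` at `a`, as a function of `x = exp a`. -/
noncomputable def logMapSlope (β x : ℝ) : ℝ :=
  (2 + β) ^ 2 * x / ((x + 1 + β) * (β * x + 2))

theorem logMap_zero (β : ℝ) : logMap β 0 = 0 := by
  rw [logMap, Real.exp_zero, show (1 : ℝ) + 1 + β = β * 1 + 2 by ring, sub_self, mul_zero]

theorem hasDerivAt_logMap (hβ0 : 0 ≤ β) (hβ1 : β < 1) (a : ℝ) :
    HasDerivAt (logMap β) (logMapSlope β (Real.exp a)) a := by
  have hb : 0 < 1 - β := sub_pos.2 hβ1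
  have hnum : HasDerivAt (fun a => Real.exp a + 1 + β) (Real.exp a) a :=
    ((Real.hasDerivAt_exp a).add_const 1).add_const β
  have hden : HasDerivAt (fun a => β * Real.exp a + 2) (β * Real.exp a) a :=
    ((Real.hasDerivAt_exp a).const_mul β).add_const 2
  refine (((hnum.log (by positivity)).sub (hden.log (by positivity))).const_mul
    ((2 + β) / (1 - β))).congr_deriv ?_
  unfold logMapSlope
  field_simp
  ring

theorem continuous_logMap (hβ0 : 0 ≤ β) (hβ1 : β < 1) : Continuous (logMap β) :=
  continuous_iff_continuousAt.2 fun a => (hasDerivAt_logMap hβ0 hβ1 a).continuousAt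

theorem logMapSlope_pos {x : ℝ} (hβ : 0 ≤ β) (hx : 0 < x) : 0 < logMapSlope β x := by
  unfold logMapSlope
  positivity

theorem strictMono_logMap (hβ0 : 0 ≤ β) (hβ1 : β < 1) : StrictMono (logMap β) :=
  strictMono_of_deriv_pos fun a => by
    rw [(hasDerivAt_logMap hβ0 hβ1 a).deriv]
    exact logMapSlope_pos hβ0 (Real.exp_pos a)

theorem logMap_nonneg {a : ℝ} (hβ0 : 0 ≤ β) (hβ1 : β < 1) (ha : 0 ≤ a) : 0 ≤ logMap β a := by
  rw [← logMap_zero β]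
  exact (strictMono_logMap hβ0 hβ1).monotone ha

theorem logMap_nonpos {a : ℝ} (hβ0 : 0 ≤ β) (hβ1 : β < 1) (ha : a ≤ 0) : logMap β a ≤ 0 := by
  rw [← logMap_zero β]
  exact (strictMono_logMap hβ0 hβ1).monotone ha

theorem logMapSlope_le_two_mul_div {x : ℝ} (hβ : 0 ≤ β) (hx : 1 ≤ x) :
    logMapSlope β x ≤ 2 * (x / (x + 1)) := by
  rw [logMapSlope, ← mul_div_assoc, div_le_div_iff₀ (by positivity) (by positivity), ← sub_nonneg]
  have : 0 ≤ x - 1 := sub_nonneg.2 hx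
  calc 0 ≤ x * (β * ((x - 1) * (2 * x + β))) := by positivity
    _ = 2 * x * ((x + 1 + β) * (β * x + 2)) - (2 + β) ^ 2 * x * (x + 1) := by ring

theorem logMap_le_two_mul_log {a : ℝ} (hβ0 : 0 ≤ β) (hβ1 : β < 1) (ha : 0 ≤ a) :
    logMap β a ≤ 2 * Real.log ((Real.exp a + 1) / 2) := by
  have hderiv : ∀ t : ℝ, HasDerivAt (fun t => 2 * Real.log ((Real.exp t + 1) / 2) - logMap β t)
      (2 * (Real.exp t / (Real.exp t + 1)) - logMapSlope β (Real.exp t)) t := fun t => by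
    have hexp : HasDerivAt (fun t => (Real.exp t + 1) / 2) (Real.exp t / 2) t :=
      ((Real.hasDerivAt_exp t).add_const 1).div_const 2
    have hlog := (hexp.log (by positivity)).const_mul 2
    rw [div_div_div_cancel_right₀ two_ne_zero] at hlog
    exact hlog.sub (hasDerivAt_logMap hβ0 hβ1 t)
  have hmono : MonotoneOn (fun t => 2 * Real.log ((Real.exp t + 1) / 2) - logMap β t)
      (Set.Ici 0) := by
    refine monotoneOn_of_deriv_nonneg (convex_Ici 0)
      (fun t _ => (hderiv t).continuousAt.continuousWithinAt)
      (fun t _ => (hderiv t).differentiableAt.differentiableWithinAt) fun t ht => ?_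
    rw [interior_Ici] at ht
    rw [(hderiv t).deriv, sub_nonneg]
    exact logMapSlope_le_two_mul_div hβ0 (Real.one_le_exp (le_of_lt ht))
  have h := hmono Set.self_mem_Ici ha ha
  norm_num [logMap_zero] at h
  exact h

theorem logMapSlope_le_one_iff {x : ℝ} (hβ : 0 ≤ β) (hx : 0 < x) :
    logMapSlope β x ≤ 1 ↔ 0 ≤ (1 - x) * (2 * (1 + β) - β * x) := by
  rw [logMapSlope, div_le_one (by positivity), ← sub_nonneg]
  ring_nf

theorem logMapSlope_lt_one_iff {x : ℝ} (hβ : 0 ≤ β) (hx : 0 < x) :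
    logMapSlope β x < 1 ↔ 0 < (1 - x) * (2 * (1 + β) - β * x) := by
  rw [logMapSlope, div_lt_one (by positivity), ← sub_pos]
  ring_nf

theorem one_le_logMapSlope {x : ℝ} (hβ : 0 ≤ β) (hx : 1 ≤ x) (hxβ : β * x ≤ 2 * (1 + β)) :
    1 ≤ logMapSlope β x := by
  refine not_lt.1 fun hlt => ?_
  rw [logMapSlope_lt_one_iff hβ (by positivity)] at hlt
  exact hlt.not_ge (mul_nonpos_of_nonpos_of_nonneg (sub_nonpos.2 hx) (sub_nonneg.2 hxβ))

theorem le_logMap {a : ℝ} (hβ0 : 0 ≤ β) (hβ1 : β < 1) (ha : 0 ≤ a)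
    (haβ : β * Real.exp a ≤ 2 * (1 + β)) : a ≤ logMap β a := by
  have hderiv : ∀ t, HasDerivAt (fun t => logMap β t - t) (logMapSlope β (Real.exp t) - 1) t :=
    fun t => (hasDerivAt_logMap hβ0 hβ1 t).sub (hasDerivAt_id t)
  have hmono : MonotoneOn (fun t => logMap β t - t) (Set.Icc 0 a) := by
    refine monotoneOn_of_deriv_nonneg (convex_Icc 0 a)
      (fun t _ => (hderiv t).continuousAt.continuousWithinAt)
      (fun t _ => (hderiv t).differentiableAt.differentiableWithinAt) fun t ht => ?_
    rw [interior_Icc] at ht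
    rw [(hderiv t).deriv, sub_nonneg]
    refine one_le_logMapSlope hβ0 (Real.one_le_exp ht.1.le) (le_trans ?_ haβ)
    gcongr
    exact ht.2.le
  have h := hmono (Set.left_mem_Icc.2 ha) (Set.right_mem_Icc.2 ha) ha
  simp only [logMap_zero] at h
  linarith

theorem logMapSlope_mono {u v : ℝ} (hβ : 0 ≤ β) (hu : 0 < u) (huv : u ≤ v) (hv : v ≤ 1) :
    logMapSlope β u ≤ logMapSlope β v := by
  have hv0 : 0 < v := hu.trans_le huv
  rw [logMapSlope, logMapSlope, div_le_div_iff₀ (by positivity) (by positivity), ← sub_nonneg]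
  have huv1 : β * (u * v) ≤ β * 1 := by
    gcongr
    exact mul_le_one₀ (huv.trans hv) hv0.le hv
  have hprod : 0 ≤ (v - u) * (2 * (1 + β) - β * (u * v)) :=
    mul_nonneg (sub_nonneg.2 huv) (by linarith)
  calc 0 ≤ (2 + β) ^ 2 * ((v - u) * (2 * (1 + β) - β * (u * v))) := by positivity
    _ = _ := by ring

theorem logMapSlope_mul_inv_lt_one {x : ℝ} (hβ : 0 ≤ β) (hx : 1 < x) :
    logMapSlope β x * logMapSlope β x⁻¹ < 1 := by
  have : 0 < x - 1 := sub_pos.2 hx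
  have hprod : logMapSlope β x * logMapSlope β x⁻¹ = (2 + β) ^ 4 * x ^ 2 /
      ((x + 1 + β) * (β * x + 2) * ((1 + (1 + β) * x) * (β + 2 * x))) := by
    unfold logMapSlope
    field_simp
    ring
  rw [hprod, div_lt_one (by positivity), ← sub_pos]
  calc 0 < (x - 1) ^ 2 *
        (2 * β * (1 + β) * (x + 1) ^ 2 + (2 + β + β ^ 2) * (2 + 3 * β) * x) := by positivity
    _ = _ := by ring

/-- As long as `logMapSlope β x` may exceed `1`, `x ≤ y` reduces the claim to `y = x`. -/
theorem logMapSlope_mul_lt_one {x y : ℝ} (hβ : 0 ≤ β) (hx : 1 < x) (hy : 1 < y)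
    (hxy : β * x ≤ 2 * (1 + β) → x ≤ y) : logMapSlope β x * logMapSlope β y⁻¹ < 1 := by
  have hx0 : 0 < x := by positivity
  have hy0 : 0 < y := by positivity
  rcases le_total (β * x) (2 * (1 + β)) with h | h
  · have hmono := logMapSlope_mono hβ (inv_pos.2 hy0) (inv_anti₀ hx0 (hxy h))
      (inv_le_one_of_one_le₀ hx.le)
    exact (mul_le_mul_of_nonneg_left hmono (logMapSlope_pos hβ hx0).le).trans_lt
      (logMapSlope_mul_inv_lt_one hβ hx)
  · have hx_le : logMapSlope β x ≤ 1 := (logMapSlope_le_one_iff hβ hx0).2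
      (mul_nonneg_of_nonpos_of_nonpos (sub_nonpos.2 hx.le) (sub_nonpos.2 h))
    have hy1 : y⁻¹ < 1 := inv_lt_one_of_one_lt₀ hy
    have hy_lt : logMapSlope β y⁻¹ < 1 := by
      rw [logMapSlope_lt_one_iff hβ (inv_pos.2 hy0)]
      refine mul_pos (sub_pos.2 hy1) ?_
      have := mul_le_mul_of_nonneg_left hy1.le hβ
      linarith
    exact mul_lt_one_of_nonneg_of_lt_one_right hx_le (logMapSlope_pos hβ (inv_pos.2 hy0)).le hy_lt

theorem neg_logMap_neg_logMap_lt {a : ℝ} (hβ0 : 0 ≤ β) (hβ1 : β < 1) (ha : 0 < a) :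
    -logMap β (-logMap β a) < a := by
  have hderiv : ∀ t, HasDerivAt (fun t => t + logMap β (-logMap β t))
      (1 + logMapSlope β (Real.exp (-logMap β t)) * -logMapSlope β (Real.exp t)) t := fun t =>
    (hasDerivAt_id t).add (HasDerivAt.comp (h₂ := logMap β) (h := fun t => -logMap β t) t
      (hasDerivAt_logMap hβ0 hβ1 (-logMap β t)) (hasDerivAt_logMap hβ0 hβ1 t).neg)
  have hmono : StrictMonoOn (fun t => t + logMap β (-logMap β t)) (Set.Ici 0) := by
    refine strictMonoOn_of_deriv_pos (convex_Ici 0)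
      (fun t _ => (hderiv t).continuousAt.continuousWithinAt) fun t ht => ?_
    rw [interior_Ici] at ht
    have hlog : 0 < logMap β t := by
      rw [← logMap_zero β]
      exact strictMono_logMap hβ0 hβ1 ht
    rw [(hderiv t).deriv, mul_neg, ← sub_eq_add_neg, sub_pos, mul_comm, Real.exp_neg]
    exact logMapSlope_mul_lt_one hβ0 (Real.one_lt_exp_iff.2 ht) (Real.one_lt_exp_iff.2 hlog)
      fun h => Real.exp_le_exp.2 (le_logMap hβ0 hβ1 (le_of_lt ht) h)
  have h := hmono Set.self_mem_Ici (Set.mem_Ici.2 ha.le) ha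
  simp only [logMap_zero, neg_zero, add_zero] at h
  linarith

end LogMap

section TwoStep

variable {ι : Type*} [Fintype ι] {β E : ℝ} {P : ι → ι → Fin 3 → ℝ}

theorem card_mul_log_le_logMap (hβ0 : 0 < β) (hβ1 : β < 1)
    (hd : Fintype.card ι * (1 - β) ≤ 2 + β) (hE : 1 ≤ E) :
    Fintype.card ι * Real.log ((E + 1 + β) / (β * E + 2)) ≤ logMap β (Real.log E) := by
  have hE0 : 0 < E := by positivity
  rw [logMap, Real.exp_log hE0, ← Real.log_div (by positivity) (by positivity)]
  refine mul_le_mul_of_nonneg_right ((le_div_iff₀ (sub_pos.2 hβ1)).2 hd) (Real.log_nonneg ?_)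
  rw [one_le_div (by positivity), ← sub_nonneg]
  calc 0 ≤ (1 - β) * (E - 1) := mul_nonneg (sub_nonneg.2 hβ1.le) (sub_nonneg.2 hE)
    _ = _ := by ring

theorem pow_card_le_exp_neg_logMap {k z : ℝ} (hβ0 : 0 < β) (hβ1 : β < 1)
    (hd : Fintype.card ι * (1 - β) ≤ 2 + β) (hz : z ≤ 0)
    (hk : k * (Real.exp z + 1 + β) = β * Real.exp z + 2) :
    k ^ Fintype.card ι ≤ Real.exp (-logMap β z) := by
  have hk' : k = (β * Real.exp z + 2) / (Real.exp z + 1 + β) :=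
    (eq_div_iff (by positivity)).2 hk
  have hk1 : 1 ≤ k := by
    rw [hk', one_le_div (by positivity), ← sub_nonneg]
    calc 0 ≤ (1 - β) * (1 - Real.exp z) :=
          mul_nonneg (sub_nonneg.2 hβ1.le) (sub_nonneg.2 (Real.exp_le_one_iff.2 hz))
      _ = _ := by ring
  have hlog : -logMap β z = (2 + β) / (1 - β) * Real.log k := by
    rw [logMap, hk', Real.log_div (by positivity) (by positivity)]
    ring
  rw [← Real.log_le_iff_le_exp (by positivity), Real.log_pow, hlog]
  exact mul_le_mul_of_nonneg_right ((le_div_iff₀ (sub_pos.2 hβ1)).2 hd) (Real.log_nonneg hk1)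

theorem slope_le_of_le {κ ρ r : ℝ} (hκ : 0 ≤ κ) (hρ : 0 < ρ) (hρr : ρ ≤ r)
    (hr : β * r + 2 * r ^ 2 ≤ κ * (1 + (1 + β) * r)) :
    β * ρ + 2 * ρ ^ 2 ≤ κ * (1 + (1 + β) * ρ) := by
  have hr0 : 0 < r := hρ.trans_le hρr
  rw [← sub_nonneg] at hr hρr ⊢
  refine nonneg_of_mul_nonneg_right ?_ hr0
  calc 0 ≤ ρ * (κ * (1 + (1 + β) * r) - (β * r + 2 * r ^ 2)) + (r - ρ) * (κ + 2 * ρ * r) := by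
        positivity
    _ = _ := by ring

theorem isBalanced_two_step_logMap {κ r : ℝ} (hβ0 : 0 < β) (hβ1 : β < 1)
    (hd : Fintype.card ι * (1 - β) ≤ 2 + β) (hE : 1 ≤ E) (hκ : 0 ≤ κ)
    (hQ : SlopesNonneg β (penalty β κ) E) (hEr : ((E + 1) / 2) ^ 2 ≤ r)
    (hr : β * r + 2 * r ^ 2 ≤ κ * (1 + (1 + β) * r)) (hP : ∀ a b, IsBalanced E (P a b)) :
    IsBalanced (Real.exp (-logMap β (-logMap β (Real.log E))))
      (treeStep β fun a => treeStep β (P a)) := by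
  have hE0 : 0 < E := by positivity
  have hlog : 0 ≤ logMap β (Real.log E) := logMap_nonneg hβ0.le hβ1 (Real.log_nonneg hE)
  set ρ := Real.exp (logMap β (Real.log E)) with hρ
  have hρ0 : 0 < ρ := Real.exp_pos _
  have hρr : ρ ≤ r := by
    refine le_trans ?_ hEr
    rw [hρ, ← Real.le_log_iff_exp_le (by positivity), Real.log_pow]
    have h := logMap_le_two_mul_log hβ0.le hβ1 (Real.log_nonneg hE)
    rwa [Real.exp_log hE0] at h
  have hk : (β + 2 * ρ) / (1 + (1 + β) * ρ) * (1 + (1 + β) * ρ) = β + 2 * ρ :=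
    div_mul_cancel₀ _ (by positivity)
  have hkκ : (β + 2 * ρ) / (1 + (1 + β) * ρ) * ρ ≤ κ := by
    rw [div_mul_eq_mul_div, div_le_iff₀ (by positivity)]
    linear_combination slope_le_of_le hκ hρ0 hρr hr
  have hk0 : 0 ≤ (β + 2 * ρ) / (1 + (1 + β) * ρ) := by positivity
  refine isBalanced_treeStep hk0 (pow_card_le_exp_neg_logMap hβ0 hβ1 hd (neg_nonpos.2 hlog) ?_)
    fun a => isBalanced_edgeMsg_treeStep hβ0 hβ1 hd hκ hE0.le hQ hρ0 ?_
      (fun y T hy hT0 hT1 h => h.parentIneq_fine hβ0.le hβ1 hκ hρ0 hk0 hk hkκ hy hT0 hT1) (hP a)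
  · rw [Real.exp_neg, ← hρ]
    field_simp
    ring
  · rw [hρ, Real.log_exp]
    exact card_mul_log_le_logMap hβ0 hβ1 hd hE

theorem isBalanced_two_step_of_lt_two (hβ0 : 0 < β) (hβ1 : β < 1)
    (hd : Fintype.card ι * (1 - β) ≤ 2 + β) (hE : 1 ≤ E) (hE2 : E < 2)
    (hP : ∀ a b, IsBalanced E (P a b)) :
    IsBalanced (Real.exp (-logMap β (-logMap β (Real.log E))))
      (treeStep β fun a => treeStep β (P a)) := by
  obtain ⟨e, rfl⟩ : ∃ e, E = 1 + e := ⟨E - 1, by ring⟩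
  have he0 : 0 ≤ e := by linarith
  have he1 : 0 ≤ 1 - e := by linarith
  have hQ := slopesNonneg_of_lt_two hβ0.le hβ1 hE hE2
  rw [add_sub_cancel_left] at hQ
  refine isBalanced_two_step_logMap hβ0 hβ1 hd hE (by positivity) hQ le_rfl ?_ hP
  rw [← sub_nonneg]
  calc 0 ≤ e * (1 / 8 * e ^ 2 * (1 - e) + 19 / 32 * e * (1 - e) + 39 / 32 * (1 - e) + 1 / 32) +
        β * (17 / 8 * e * ((1 + e + 1) / 2) ^ 2) := by positivity
    _ = _ := by ring

theorem isBalanced_two_step_of_le_two_add (hβ0 : 0 < β) (hβ1 : β < 1)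
    (hd : Fintype.card ι * (1 - β) ≤ 2 + β) (hE : 2 ≤ E) (hE2 : E ≤ 2 + 2 * β)
    (hP : ∀ a b, IsBalanced E (P a b)) :
    IsBalanced (Real.exp (-logMap β (-logMap β (Real.log E))))
      (treeStep β fun a => treeStep β (P a)) := by
  refine isBalanced_two_step_logMap hβ0 hβ1 hd (by linarith) (by positivity)
    (slopesNonneg_of_le_two_add hβ0.le hβ1 hE hE2) (r := (3 / 2 + β) ^ 2) ?_ ?_ hP
  · gcongr
    linarith
  · rw [← sub_nonneg]
    calc 0 ≤ 1 / 32 + 31 / 32 * β + 77 / 16 * β ^ 2 + 57 / 8 * β ^ 3 + 9 / 4 * β ^ 4 := by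
          positivity
      _ = _ := by ring

theorem isBalanced_two_step_of_le (hβ0 : 0 < β) (hβ1 : β < 1)
    (hd : Fintype.card ι * (1 - β) ≤ 2 + β) (hE : 1 ≤ E) (hE2 : E ≤ 2 + 2 * β)
    (hP : ∀ a b, IsBalanced E (P a b)) :
    IsBalanced (Real.exp (-logMap β (-logMap β (Real.log E))))
      (treeStep β fun a => treeStep β (P a)) := by
  rcases lt_or_ge E 2 with h | h
  · exact isBalanced_two_step_of_lt_two hβ0 hβ1 hd hE h hP
  · exact isBalanced_two_step_of_le_two_add hβ0 hβ1 hd h hE2 hP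

theorem isBalanced_two_step_crude (hβ0 : 0 < β) (hβ1 : β < 1)
    (hd : Fintype.card ι * (1 - β) ≤ 2 + β) (hE : 2 + 2 * β ≤ E)
    (hE2 : E ≤ 7 / 2 ∨ 1 / 4 ≤ β ∧ E ≤ 9 / 2) (hP : ∀ a b, IsBalanced E (P a b)) :
    IsBalanced (200 / 201 * E) (treeStep β fun a => treeStep β (P a)) := by
  have hE0 : 0 < E := by linarith
  obtain ⟨s, hs, hsE⟩ : ∃ s : ℝ, 0 < s ∧ s ^ 2 = 200 / 201 * E :=
    ⟨√(200 / 201 * E), by positivity, Real.sq_sqrt (by positivity)⟩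
  obtain rfl : E = 201 / 200 * s ^ 2 := by rw [hsE]; ring
  have hs0 : 141 / 100 + 58 / 100 * β ≤ s := by
    refine le_of_sq_le_sq ?_ hs.le
    nlinarith
  have hs1 : s < 22 / 10 + 75 / 100 * β := by
    refine lt_of_pow_lt_pow_left₀ 2 (by positivity) ?_
    rcases hE2 with h | ⟨_, _⟩ <;> nlinarith
  have hlog : ∀ x : ℝ, 1 ≤ x →
      Fintype.card ι * Real.log ((x + 1 + β) / (β * x + 2)) ≤ Real.log (((x + 1) / 2) ^ 2) := by
    intro x hx
    refine (card_mul_log_le_logMap hβ0 hβ1 hd hx).trans ?_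
    have h := logMap_le_two_mul_log hβ0.le hβ1 (Real.log_nonneg hx)
    rwa [Real.exp_log (by positivity), ← Nat.cast_two, ← Real.log_pow] at h
  have hden : 0 < 2 - β + 2 * β * s := by
    have : 0 < 2 * β * s := by positivity
    linarith
  rw [← hsE]
  refine isBalanced_treeStep (k := (2 * s + β) / (2 - β + 2 * β * s)) (by positivity) ?_ fun a =>
    isBalanced_edgeMsg_treeStep hβ0 hβ1 hd (by positivity) hE0.le
      (slopesNonneg_of_le_seven_halves hβ0.le hβ1 (by linarith) hE2) (by positivity)
      (hlog _ (by linarith))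
      (fun y T hy _ hT1 h => h.parentIneq_crude hβ0.le hβ1 hs0 hs1 hy hT1) (hP a)
  rw [← Real.log_le_log_iff (by positivity) (by positivity), Real.log_pow]
  convert hlog (2 * s - 1) (by linarith) using 3 <;> ring

end TwoStep

section Binary

variable {β E : ℝ}

theorem four_mul_sq_add_one_le {x : ℝ} (hE : 7 / 2 ≤ E) (hx : 0 ≤ x) (hxE : x ≤ E ^ 2) :
    (x + x) ^ 2 + 1 ≤ 200 / 201 * E * ((1 + x) * (1 + x)) := by
  have hquad : 0 ≤ E * (200 / 201 * E ^ 2 - 4 * E + 400 / 201) :=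
    mul_nonneg (by positivity) (by nlinarith)
  have hslope : (4 - 200 / 201 * E) * x ≤ 2 * (200 / 201 * E) := by
    rcases le_total (200 / 201 * E) 4 with h | h
    · calc (4 - 200 / 201 * E) * x ≤ (4 - 200 / 201 * E) * E ^ 2 :=
            mul_le_mul_of_nonneg_left hxE (sub_nonneg.2 h)
        _ ≤ 2 * (200 / 201 * E) := by linear_combination hquad
    · exact (mul_nonpos_of_nonpos_of_nonneg (sub_nonpos.2 h) hx).trans (by linarith)
  have hprod : 0 ≤ x * (2 * (200 / 201 * E) - (4 - 200 / 201 * E) * x) :=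
    mul_nonneg hx (sub_nonneg.2 hslope)
  linear_combination hprod + 200 / 201 * hE

theorem sq_add_mul_sq_add_one_le {a : ℝ} (hE : 7 / 2 ≤ E) (ha : 0 ≤ a) (haE : a < E) :
    (a ^ 2 + E * a) ^ 2 + 1 ≤ 200 / 201 * E * ((1 + a ^ 2) * (1 + E * a)) := by
  obtain ⟨t, ht, rfl⟩ : ∃ t, 0 ≤ t ∧ E = 7 / 2 + t := ⟨E - 7 / 2, by linarith, by ring⟩
  obtain ⟨s, hs, hsa⟩ := exists_eq_div_one_add (x := a / (7 / 2 + t)) (by positivity)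
    ((div_lt_one (by positivity)).2 haE)
  obtain rfl : a = (7 / 2 + t) * (s / (1 + s)) := by
    rw [← hsa, mul_div_cancel₀ _ (by positivity)]
  -- The squares absorb the negative coefficients, all of which occur at `s ^ 2`.
  have hsquares : 0 ≤ (s * (190 * t + 170 * t ^ 2) * (s - 1 / 10) ^ 2 +
      61 * t ^ 3 * s * (s - 1 / 12) ^ 2 + 1 / 2 * t ^ 3 * s * (1 - t * s) ^ 2) / (1 + s) ^ 4 := by
    positivity
  rw [← sub_nonneg]
  refine hsquares.trans (sub_nonneg.1 ?_)
  field_simp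
  ring_nf
  positivity

theorem add_sq_add_one_le {A B : ℝ} (hE : 7 / 2 ≤ E) (hA : 0 < A) (hB : 0 < B)
    (hAB : A ^ 2 ≤ E ^ 2 * B) (hBA : B ^ 2 ≤ E ^ 2 * A) :
    (A + B) ^ 2 + 1 ≤ 200 / 201 * E * ((1 + A) * (1 + B)) := by
  wlog hle : A ≤ B generalizing A B
  · rw [add_comm A, mul_comm (1 + A)]
    exact this hB hA hBA hAB (le_of_not_ge hle)
  have hE0 : 0 < E := by linarith
  obtain ⟨a, ha, rfl⟩ : ∃ a : ℝ, 0 < a ∧ A = a ^ 2 :=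
    ⟨√A, Real.sqrt_pos.2 hA, (Real.sq_sqrt hA.le).symm⟩
  have hBa : B ≤ E * a := le_of_sq_le_sq (by rwa [mul_pow]) (by positivity)
  have haE : a ≤ E := le_of_mul_le_mul_right (by rw [← sq]; exact hle.trans hBa) ha
  have hlo := four_mul_sq_add_one_le hE (sq_nonneg a) (pow_le_pow_left₀ ha.le haE 2)
  rcases haE.eq_or_lt with rfl | haE
  · obtain rfl : B = a ^ 2 := le_antisymm (hBa.trans_eq (sq a).symm) hle
    exact hlo
  -- The difference of the two sides is concave in `B`, and `B` lies between `a ^ 2` and `E * a`.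
  have hhi := sq_add_mul_sq_add_one_le hE ha.le haE
  have hgap : 0 < E * a - a ^ 2 := by
    rw [sq, ← sub_mul]
    exact mul_pos (sub_pos.2 haE) ha
  rw [← sub_nonneg] at hlo hhi hle hBa ⊢
  refine nonneg_of_mul_nonneg_right ?_ hgap
  linear_combination mul_nonneg hBa hlo + mul_nonneg hle hhi +
    mul_nonneg hgap.le (mul_nonneg hle hBa)

theorem edgeMsg_sq_le_of_seven_halves_le {x y z : ℝ} (hβ0 : 0 ≤ β) (hβ1 : β < 1) (hE : 7 / 2 ≤ E)
    (hx : 0 < x) (hy : 0 < y) (hz : 0 < z) (hyx : y ^ 2 ≤ E ^ 2 * (x * z))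
    (hzx : z ^ 2 ≤ E ^ 2 * (x * y)) :
    (β * x + y + z) ^ 2 ≤ 200 / 201 * E * ((x + β * y + z) * (x + y + β * z)) := by
  have hscale : (y + z) ^ 2 + x ^ 2 ≤ 200 / 201 * E * ((x + y) * (x + z)) := by
    have h := add_sq_add_one_le (A := y / x) (B := z / x) hE (by positivity) (by positivity)
      (by field_simp; linarith) (by field_simp; linarith)
    field_simp at h
    linarith
  have hK : 0 ≤ 200 / 201 * E - 2 := by linarith
  have hβ2 : 0 ≤ 1 - β ^ 2 := sub_nonneg.2 (pow_le_one₀ hβ0 hβ1.le)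
  have hrest : 0 ≤ (1 - β ^ 2) * x ^ 2 + β * ((200 / 201 * E - 2) * (x * (y + z)) +
      200 / 201 * E * (y ^ 2 + z ^ 2)) + β ^ 2 * (200 / 201 * E * (y * z)) := by positivity
  linear_combination hscale + hrest

variable {ι : Type*} [Fintype ι]

theorem isBalanced_treeStep_of_seven_halves_le {P : ι → Fin 3 → ℝ} (hβ0 : 0 < β) (hβ1 : β < 1)
    (hι : Fintype.card ι = 2) (hE : 7 / 2 ≤ E) (hP : ∀ a, IsBalanced E (P a)) :
    IsBalanced (200 / 201 * E) (treeStep β P) := by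
  have hsq : √(200 / 201 * E) ^ 2 = 200 / 201 * E := Real.sq_sqrt (by positivity)
  refine isBalanced_treeStep (Real.sqrt_nonneg _) (hι ▸ hsq.le) fun a =>
    isBalanced_edgeMsg (fun c => (hP a).edgeMsg_pos hβ0 c) fun i j l hij hjl hil => ?_
  rw [hsq]
  exact edgeMsg_sq_le_of_seven_halves_le hβ0.le hβ1 hE ((hP a).pos i) ((hP a).pos j)
    ((hP a).pos l) ((hP a).sq_le j i l hij.symm hil hjl) ((hP a).sq_le l i j hil.symm hij hjl.symm)

theorem isBalanced_two_step_of_seven_halves_le {P : ι → ι → Fin 3 → ℝ} (hβ0 : 0 < β) (hβ1 : β < 1)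
    (hι : Fintype.card ι = 2) (hE : 7 / 2 ≤ E) (hP : ∀ a b, IsBalanced E (P a b)) :
    IsBalanced (200 / 201 * E) (treeStep β fun a => treeStep β (P a)) :=
  isBalanced_treeStep_of_seven_halves_le hβ0 hβ1 hι hE fun a =>
    (isBalanced_treeStep_of_seven_halves_le hβ0 hβ1 hι hE (hP a)).mono (by positivity)
      (by linarith)

end Binary

section Initial

variable {β : ℝ} {d : ℕ}

theorem div_pow_le_exp {a b c : ℝ} (ha : 0 < a) (hb : 0 < b) (hc : 0 ≤ c)
    (h : (d : ℝ) ^ 2 * (a - b) ^ 2 ≤ c ^ 2 * (a * b)) : (a / b) ^ d ≤ Real.exp c := by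
  rw [← Real.log_le_iff_le_exp (by positivity), Real.log_pow, Real.log_div ha.ne' hb.ne']
  refine le_of_sq_le_sq ?_ hc
  calc (d * (Real.log a - Real.log b)) ^ 2 = (d : ℝ) ^ 2 * (Real.log a - Real.log b) ^ 2 :=
        mul_pow _ _ _
    _ ≤ (d : ℝ) ^ 2 * ((a - b) ^ 2 / (a * b)) := by
        gcongr
        exact log_sub_log_sq_le ha hb
    _ ≤ c ^ 2 := by rwa [← mul_div_assoc, div_le_iff₀ (by positivity)]

theorem mul_one_sub_le_two_add (h : 1 - 3 / ((d : ℝ) + 1) ≤ β) :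
    d * (1 - β) ≤ 2 + β := by
  rw [sub_le_comm, le_div_iff₀ (by positivity)] at h
  linarith

theorem one_quarter_le (hβ1 : β < 1) (hd3 : 3 ≤ d) (hd : d * (1 - β) ≤ 2 + β) : 1 / 4 ≤ β := by
  have hd3' : (3 : ℝ) ≤ d := by exact_mod_cast hd3
  have := mul_le_mul_of_nonneg_right hd3' (sub_nonneg.2 hβ1.le)
  linarith

theorem one_div_pow_le (hβ0 : 0 < β) (hd3 : 3 ≤ d) (hd : d * (1 - β) ≤ 2 + β) :
    (1 / β) ^ d ≤ 64 := by
  have hd3' : (3 : ℝ) ≤ d := by exact_mod_cast hd3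
  have hd2 : 0 < (d : ℝ) - 2 := by linarith
  have hle : (1 / β) ^ d ≤ (((d : ℝ) + 1) / (d - 2)) ^ d := by
    gcongr ?_ ^ d
    rw [div_le_div_iff₀ hβ0 hd2]
    linarith
  refine hle.trans ?_
  rcases hd3.eq_or_lt with rfl | hd4
  · norm_num
  · have hd4' : (4 : ℝ) ≤ d := by exact_mod_cast hd4
    refine (div_pow_le_exp (c := 4) (by positivity) hd2 (by norm_num) (by nlinarith)).trans ?_
    rw [← Real.le_log_iff_exp_le (by norm_num), show (64 : ℝ) = 2 ^ 6 by norm_num, Real.log_pow]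
    have := Real.log_two_gt_d9
    push_cast
    linarith

theorem two_div_one_add_pow_le (hβ0 : 0 < β) (hd3 : 3 ≤ d) (hd : d * (1 - β) ≤ 2 + β) :
    (2 / (1 + β)) ^ d ≤ 9 / 2 := by
  have hd3' : (3 : ℝ) ≤ d := by exact_mod_cast hd3
  have hd1 : 0 < 2 * (d : ℝ) - 1 := by linarith
  calc (2 / (1 + β)) ^ d ≤ ((2 * (d : ℝ) + 2) / (2 * d - 1)) ^ d := by
        gcongr ?_ ^ d
        rw [div_le_div_iff₀ (by positivity) hd1]
        linarith
    _ ≤ Real.exp (3 / 2) :=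
        div_pow_le_exp (by positivity) hd1 (by norm_num) (by nlinarith)
    _ ≤ 9 / 2 := by
        refine le_of_sq_le_sq ?_ (by norm_num)
        calc Real.exp (3 / 2) ^ 2 = Real.exp 1 ^ 3 := by
              rw [← Real.exp_nat_mul, ← Real.exp_nat_mul]
              norm_num
          _ ≤ 2.7182818286 ^ 3 := by
              gcongr
              exact Real.exp_one_lt_d9.le
          _ ≤ (9 / 2) ^ 2 := by norm_num

theorem sub_sq_le_of_sq_le {A B : ℝ} (hA : 0 < A) (hB : 0 < B) (hAB : A ^ 2 ≤ 64 * B)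
    (hBA : B ^ 2 ≤ 64 * A) : (B - A) ^ 2 ≤ 15 / 2 * (A + B) := by
  wlog hle : A ≤ B generalizing A B
  · rw [← neg_sq, neg_sub, add_comm]
    exact this hB hA hBA hAB (le_of_not_ge hle)
  obtain ⟨z, rfl⟩ : ∃ z, B = 64 * z := ⟨B / 64, by ring⟩
  have hz0 : 0 < z := by linarith
  have hzA : 64 * z ^ 2 ≤ A := by linarith
  have hz1 : z ≤ 1 := by nlinarith
  have hsq : (64 * z - A) ^ 2 ≤ (64 * z - 64 * z ^ 2) ^ 2 := by
    have := sub_nonneg.2 hle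
    gcongr
  have hcubic : 0 ≤ z * ((z - 28 / 100) ^ 2 * (1229 / 100 - 854 / 100 * z)) :=
    mul_nonneg hz0.le (mul_nonneg (sq_nonneg _) (by linarith))
  nlinarith [pow_pos hz0 2, pow_pos hz0 3]

theorem edgeMsg_sq_le_of_quarter_le {x y z : ℝ} (hβ : 1 / 4 ≤ β) (hβ1 : β < 1) (hx : 0 < x)
    (hy : 0 < y) (hz : 0 < z) (hyx : y ^ 2 ≤ 8 ^ 2 * (x * z)) (hzx : z ^ 2 ≤ 8 ^ 2 * (x * y)) :
    (β * x + y + z) ^ 2 ≤ (2 / (1 + β)) ^ 2 * ((x + β * y + z) * (x + y + β * z)) := by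
  have := sub_pos.2 hβ1
  have hscale : (z - y) ^ 2 ≤ 15 / 2 * (x * (y + z)) := by
    have h := sub_sq_le_of_sq_le (A := y / x) (B := z / x) (by positivity) (by positivity)
      (by field_simp; linarith) (by field_simp; linarith)
    field_simp at h
    linarith
  have hdiff : (1 - β) * (z - y) ^ 2 ≤
      (2 + β) * ((2 + β + β ^ 2) * x ^ 2 + 2 * (1 + β) * (x * (y + z))) := by
    have : 0 < x * (y + z) := by positivity
    calc (1 - β) * (z - y) ^ 2 ≤ 3 / 4 * (15 / 2 * (x * (y + z))) := by
          gcongr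
          linarith
      _ ≤ (2 + 1 / 4) * (2 * (1 + 1 / 4) * (x * (y + z))) := by linarith
      _ ≤ (2 + β) * (2 * (1 + β) * (x * (y + z))) := by gcongr
      _ ≤ (2 + β) * ((2 + β + β ^ 2) * x ^ 2 + 2 * (1 + β) * (x * (y + z))) := by
          gcongr
          exact le_add_of_nonneg_left (by positivity)
  rw [div_pow, div_mul_eq_mul_div, le_div_iff₀ (by positivity)]
  linear_combination (1 - β) * hdiff

variable {ι : Type*} [Fintype ι]

theorem isBalanced_edgeMsg_of_nonneg {p : Fin 3 → ℝ} (hβ0 : 0 < β) (hβ1 : β < 1)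
    (hp : ∀ c, 0 ≤ p c) (hp' : ∃ c, 0 < p c) : IsBalanced √(1 / β) (edgeMsg β p) := by
  refine isBalanced_edgeMsg (edgeMsg_pos hβ0 hp hp') fun i j l _ _ _ => ?_
  rw [Real.sq_sqrt (by positivity), div_mul_eq_mul_div, one_mul, le_div_iff₀ hβ0, ← sub_nonneg]
  have hi := hp i
  have hj := hp j
  have hl := hp l
  have := sub_pos.2 hβ1
  calc 0 ≤ (1 - β) * ((1 + β + β ^ 2) * p i ^ 2 + (1 + 2 * β) * (p i * (p j + p l)) +
        (1 - β) * (p j * p l)) := by positivity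
    _ = _ := by ring

theorem isBalanced_treeStep_of_nonneg {P : ι → Fin 3 → ℝ} (hβ0 : 0 < β) (hβ1 : β < 1)
    (hP : ∀ a c, 0 ≤ P a c) (hP' : ∀ a, ∃ c, 0 < P a c) :
    IsBalanced (√(1 / β) ^ Fintype.card ι) (treeStep β P) :=
  isBalanced_treeStep (Real.sqrt_nonneg _) le_rfl fun a =>
    isBalanced_edgeMsg_of_nonneg hβ0 hβ1 (hP a) (hP' a)

theorem isBalanced_two_step_of_nonneg {P : ι → ι → Fin 3 → ℝ} (hβ0 : 0 < β) (hβ1 : β < 1)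
    (hι : 3 ≤ Fintype.card ι) (hd : Fintype.card ι * (1 - β) ≤ 2 + β)
    (hP : ∀ a b c, 0 ≤ P a b c) (hP' : ∀ a b, ∃ c, 0 < P a b c) :
    IsBalanced (9 / 2) (treeStep β fun a => treeStep β (P a)) := by
  have hsqrt : √(1 / β) ^ Fintype.card ι ≤ 8 := by
    refine le_of_sq_le_sq ?_ (by norm_num)
    rw [pow_right_comm, Real.sq_sqrt (by positivity)]
    exact (one_div_pow_le hβ0 hι hd).trans (by norm_num)
  have hchild : ∀ a, IsBalanced 8 (treeStep β (P a)) := fun a =>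
    (isBalanced_treeStep_of_nonneg hβ0 hβ1 (hP a) (hP' a)).mono (by positivity) hsqrt
  refine isBalanced_treeStep (by positivity) (two_div_one_add_pow_le hβ0 hι hd) fun a =>
    isBalanced_edgeMsg (fun c => (hchild a).edgeMsg_pos hβ0 c) fun i j l hij hjl hil => ?_
  exact edgeMsg_sq_le_of_quarter_le (one_quarter_le hβ1 hι hd) hβ1 ((hchild a).pos i)
    ((hchild a).pos j) ((hchild a).pos l) ((hchild a).sq_le j i l hij.symm hil hjl)
    ((hchild a).sq_le l i j hil.symm hij hjl.symm)

end Initial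

section Contraction

variable {β a : ℝ}

/-- A bound, on the logarithmic scale, for the level to which two generations of the tree improve
the level `a`: the recursion `logMap` for small `a`, and a constant gain otherwise. -/
noncomputable def twoStepLevel (β a : ℝ) : ℝ :=
  max (-logMap β (-logMap β a)) (a - Real.log (201 / 200))

theorem continuous_twoStepLevel (hβ0 : 0 ≤ β) (hβ1 : β < 1) : Continuous (twoStepLevel β) := by
  have h := continuous_logMap hβ0 hβ1
  exact (h.comp h.neg).neg.max (continuous_id.sub continuous_const)

theorem twoStepLevel_lt (hβ0 : 0 ≤ β) (hβ1 : β < 1) (ha : 0 < a) : twoStepLevel β a < a :=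
  max_lt (neg_logMap_neg_logMap_lt hβ0 hβ1 ha) (sub_lt_self a (Real.log_pos (by norm_num)))

theorem twoStepLevel_nonneg (hβ0 : 0 ≤ β) (hβ1 : β < 1) (ha : 0 ≤ a) : 0 ≤ twoStepLevel β a :=
  le_max_of_le_left <| neg_nonneg.2 <| logMap_nonpos hβ0 hβ1 <| neg_nonpos.2 <|
    logMap_nonneg hβ0 hβ1 ha

theorem twoStepLevel_zero (β : ℝ) : twoStepLevel β 0 = 0 := by
  rw [twoStepLevel, logMap_zero, neg_zero, logMap_zero, neg_zero, zero_sub]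
  exact max_eq_left (neg_nonpos.2 (Real.log_nonneg (by norm_num)))

theorem twoStepLevel_le (hβ0 : 0 ≤ β) (hβ1 : β < 1) (ha : 0 ≤ a) : twoStepLevel β a ≤ a := by
  rcases ha.eq_or_lt with rfl | ha
  · exact (twoStepLevel_zero β).le
  · exact (twoStepLevel_lt hβ0 hβ1 ha).le

theorem iterate_twoStepLevel_mem_Icc (hβ0 : 0 ≤ β) (hβ1 : β < 1) (ha : 0 ≤ a) (k : ℕ) :
    (twoStepLevel β)^[k] a ∈ Set.Icc 0 a := by
  induction k with
  | zero => exact ⟨ha, le_rfl⟩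
  | succ k ih =>
    rw [Function.iterate_succ_apply']
    exact ⟨twoStepLevel_nonneg hβ0 hβ1 ih.1, (twoStepLevel_le hβ0 hβ1 ih.1).trans ih.2⟩

theorem tendsto_iterate_twoStepLevel (hβ0 : 0 ≤ β) (hβ1 : β < 1) (ha : 0 ≤ a) :
    Tendsto (fun k => (twoStepLevel β)^[k] a) atTop (nhds 0) := by
  have hnonneg : ∀ k, 0 ≤ (twoStepLevel β)^[k] a := fun k =>
    (iterate_twoStepLevel_mem_Icc hβ0 hβ1 ha k).1
  have hanti : Antitone fun k => (twoStepLevel β)^[k] a := antitone_nat_of_succ_le fun k => by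
    rw [Function.iterate_succ_apply']
    exact twoStepLevel_le hβ0 hβ1 (hnonneg k)
  have hlim := tendsto_atTop_ciInf hanti ⟨0, Set.forall_mem_range.2 hnonneg⟩
  have hfixed := isFixedPt_of_tendsto_iterate hlim
    (continuous_twoStepLevel hβ0 hβ1).continuousAt
  rcases (le_ciInf hnonneg).eq_or_lt with hzero | hpos
  · rwa [← hzero] at hlim
  · exact absurd hfixed (twoStepLevel_lt hβ0 hβ1 hpos).ne

theorem isBalanced_exp_twoStepLevel {ι : Type*} [Fintype ι] {P : ι → ι → Fin 3 → ℝ}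
    (hβ0 : 0 < β) (hβ1 : β < 1) (hd : Fintype.card ι * (1 - β) ≤ 2 + β) (ha : 0 ≤ a)
    (h : Fintype.card ι = 2 ∨ 1 / 4 ≤ β ∧ Real.exp a ≤ 9 / 2)
    (hP : ∀ i j, IsBalanced (Real.exp a) (P i j)) :
    IsBalanced (Real.exp (twoStepLevel β a)) (treeStep β fun i => treeStep β (P i)) := by
  rcases le_total (Real.exp a) (2 + 2 * β) with hsmall | hlarge
  · have hbal := isBalanced_two_step_of_le hβ0 hβ1 hd (Real.one_le_exp ha) hsmall hP
    rw [Real.log_exp] at hbal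
    exact hbal.mono (Real.exp_pos _).le (Real.exp_le_exp.2 (le_max_left _ _))
  suffices hbal : IsBalanced (200 / 201 * Real.exp a) (treeStep β fun i => treeStep β (P i)) by
    refine hbal.mono (by positivity) (le_trans (le_of_eq ?_) (Real.exp_le_exp.2 (le_max_right _ _)))
    rw [Real.exp_sub, Real.exp_log (by norm_num)]
    ring
  rcases le_total (Real.exp a) (7 / 2) with h72 | h72
  · exact isBalanced_two_step_crude hβ0 hβ1 hd hlarge (Or.inl h72) hP
  · rcases h with hι | h
    · exact isBalanced_two_step_of_seven_halves_le hβ0 hβ1 hι h72 hP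
    · exact isBalanced_two_step_crude hβ0 hβ1 hd hlarge (Or.inr h) hP

end Contraction

section Convergence

variable {β : ℝ} {d : ℕ}

theorem isBalanced_rootWeight_of_nonneg (hβ0 : 0 < β) (hβ1 : β < 1) (n : ℕ)
    (τ : (Fin (n + 1) → Fin d) → Fin 3) :
    IsBalanced (√(1 / β) ^ d) (rootWeight 3 d (n + 1) β τ) := by
  rw [rootWeight_succ]
  have h := isBalanced_treeStep_of_nonneg
    (P := fun j => rootWeight 3 d n β fun f => τ (Fin.cons j f)) hβ0 hβ1
    (fun j => rootWeight_nonneg hβ0.le _) fun j => exists_rootWeight_pos hβ0 _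
  rwa [Fintype.card_fin] at h

theorem rootWeight_add_two {q : ℕ} (n : ℕ) (τ : (Fin (n + 2) → Fin d) → Fin q) :
    rootWeight q d (n + 2) β τ = treeStep β fun i => treeStep β fun j =>
      rootWeight q d n β fun f => τ (Fin.cons i (Fin.cons j f)) := by
  simp only [rootWeight_succ]

theorem exists_isBalanced_rootWeight (hβ0 : 0 < β) (hβ1 : β < 1) (hd2 : 2 ≤ d)
    (hd : d * (1 - β) ≤ 2 + β) :
    ∃ a, 0 ≤ a ∧ (d = 2 ∨ 1 / 4 ≤ β ∧ Real.exp a ≤ 9 / 2) ∧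
      ∀ n (τ : (Fin (n + 2) → Fin d) → Fin 3),
        IsBalanced (Real.exp a) (rootWeight 3 d (n + 2) β τ) := by
  rcases hd2.eq_or_lt with rfl | hd3
  · refine ⟨Real.log (1 / β), Real.log_nonneg ((one_le_div hβ0).2 hβ1.le), Or.inl rfl,
      fun n τ => ?_⟩
    have h := isBalanced_rootWeight_of_nonneg hβ0 hβ1 (n + 1) τ
    rwa [Real.sq_sqrt (by positivity), ← Real.exp_log (one_div_pos.2 hβ0)] at h
  · refine ⟨Real.log (9 / 2), Real.log_nonneg (by norm_num),
      Or.inr ⟨one_quarter_le hβ1 hd3 hd, (Real.exp_log (by norm_num)).le⟩, fun n τ => ?_⟩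
    rw [rootWeight_add_two, Real.exp_log (by norm_num)]
    exact isBalanced_two_step_of_nonneg hβ0 hβ1 (by rwa [Fintype.card_fin])
      (by simpa only [Fintype.card_fin] using hd)
      (fun i j => rootWeight_nonneg hβ0.le _) fun i j => exists_rootWeight_pos hβ0 _

theorem isBalanced_rootWeight_iterate {a : ℝ} {m : ℕ} (hβ0 : 0 < β) (hβ1 : β < 1)
    (hd : d * (1 - β) ≤ 2 + β) (ha : 0 ≤ a) (h : d = 2 ∨ 1 / 4 ≤ β ∧ Real.exp a ≤ 9 / 2)
    (hm : ∀ n, m ≤ n → ∀ τ, IsBalanced (Real.exp a) (rootWeight 3 d n β τ)) (k : ℕ) :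
    ∀ n, m + 2 * k ≤ n → ∀ τ,
      IsBalanced (Real.exp ((twoStepLevel β)^[k] a)) (rootWeight 3 d n β τ) := by
  induction k with
  | zero => exact hm
  | succ k ih =>
    intro n hn τ
    obtain ⟨n, rfl⟩ : ∃ n', n = n' + 2 := ⟨n - 2, by lia⟩
    have hmem := iterate_twoStepLevel_mem_Icc hβ0.le hβ1 ha k
    rw [Function.iterate_succ_apply', rootWeight_add_two]
    refine isBalanced_exp_twoStepLevel hβ0 hβ1 (by simpa only [Fintype.card_fin] using hd) hmem.1 ?_
      fun i j => ih n (by lia) _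
    rw [Fintype.card_fin]
    exact h.imp_right fun h => ⟨h.1, (Real.exp_le_exp.2 hmem.2).trans h.2⟩

theorem eventually_isBalanced_exp {ε : ℝ} (hβ0 : 0 < β) (hβ1 : β < 1) (hd2 : 2 ≤ d)
    (hd : d * (1 - β) ≤ 2 + β) (hε : 0 < ε) :
    ∀ᶠ n in atTop, ∀ τ, IsBalanced (Real.exp ε) (rootWeight 3 d n β τ) := by
  obtain ⟨a, ha, hcase, hbase⟩ := exists_isBalanced_rootWeight hβ0 hβ1 hd2 hd
  have hbase' : ∀ n, 2 ≤ n → ∀ τ, IsBalanced (Real.exp a) (rootWeight 3 d n β τ) := by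
    intro n hn
    obtain ⟨n, rfl⟩ := Nat.exists_eq_add_of_le' hn
    exact hbase n
  obtain ⟨k, hk⟩ :=
    ((tendsto_iterate_twoStepLevel hβ0.le hβ1 ha).eventually (gt_mem_nhds hε)).exists
  filter_upwards [eventually_ge_atTop (2 + 2 * k)] with n hn τ
  exact (isBalanced_rootWeight_iterate hβ0 hβ1 hd ha hcase hbase' k n hn τ).mono
    (Real.exp_pos _).le (Real.exp_le_exp.2 hk.le)

theorem pottsGamma_le_exp {n : ℕ} {ε : ℝ} (hβ0 : 0 < β) (hε : 0 ≤ ε)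
    (h : ∀ τ, IsBalanced (Real.exp ε) (rootWeight 3 d n β τ)) :
    pottsGamma 3 d β n ≤ Real.exp (2 * ε) := by
  refine pottsGamma_le hβ0 fun τ c₁ c₂ => ?_
  rw [div_le_iff₀ ((h τ).pos c₂), show Real.exp (2 * ε) = Real.exp ε ^ 2 from
    mod_cast Real.exp_nat_mul ε 2]
  exact (h τ).le_mul (Real.one_le_exp hε) c₁ c₂

theorem tendsto_pottsGamma (hβ0 : 0 < β) (hβ1 : β < 1) (hd2 : 2 ≤ d)
    (hd : d * (1 - β) ≤ 2 + β) : Tendsto (pottsGamma 3 d β) atTop (nhds 1) := by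
  refine tendsto_order.2 ⟨fun x hx => .of_forall fun n => hx.trans_le (one_le_pottsGamma hβ0),
    fun x hx => ?_⟩
  have hlog : 0 < Real.log x := Real.log_pos hx
  filter_upwards [eventually_isBalanced_exp hβ0 hβ1 hd2 hd (ε := Real.log x / 3)
    (by positivity)] with n hn
  refine (pottsGamma_le_exp hβ0 (by positivity) hn).trans_lt ?_
  rw [← Real.lt_log_iff_exp_lt (by positivity)]
  linarith

end Convergence

/-- If `d = 2` and `β ∈ (0,1)`, then `γ(3,β,2,n) → 1` as `n → ∞`.
If `d ≥ 3` and `1 - 3/(d+1) ≤ β < 1`, then `γ(3,β,d,n) → 1` as `n → ∞`. -/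
theorem potts_q3_gamma_tendsto_one (d : ℕ) (β : ℝ)
    (h : (d = 2 ∧ 0 < β ∧ β < 1) ∨
      (3 ≤ d ∧ 1 - 3 / ((d : ℝ) + 1) ≤ β ∧ β < 1)) :
    Filter.Tendsto (pottsGamma 3 d β) Filter.atTop (nhds 1) := by
  rcases h with ⟨rfl, hβ0, hβ1⟩ | ⟨hd3, hβ, hβ1⟩
  · exact tendsto_pottsGamma hβ0 hβ1 le_rfl (by push_cast; linarith)
  · have hd := mul_one_sub_le_two_add hβ
    have hβ4 := one_quarter_le hβ1 hd3 hd
    exact tendsto_pottsGamma (by linarith) hβ1 (by lia) hd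
end

section
/- Let q = 3 and d ≥ 2, and set β_* = max{1 − 3/(d+1), 0}. Then for every α ∈ (1, 53/27], for all colours c₁, c₂ ∈ [3] and for all p^{(1)},…,p^{(d)} ∈ Ex_{c₂}(α), it holds that h_{c₁,c₂,β_*}(p^{(1)},…,p^{(d)}) < α^{1/d}. -/
open Filter

/-!
Put `α = (s + 1) / (s - 1)`, so that `log α = 2 artanh (1 / s)` and
`α ^ (1 / d) = (1 + τ) / (1 - τ)` with `τ = tanh (artanh (1 / s) / d)`. Replacing `τ` by a rational
lower bound, the claim becomes `Q < a ∏ₖ fₖ + b ∏ₖ gₖ`, where `fₖ`, `gₖ` are the factors which the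
`k`-th child contributes to the two nontrivial `g`'s. Write each product as `exp (∑ₖ log _)` and
bound `exp` below by its tangent line where it takes the value `1 / α` for the `fₖ` and
`(2 * s - 1) / (2 * s + 1)` for the `gₖ`: roughly the values of the products when half of the
children have their only entry `α` at `c₁` and the other half have two entries `α`. The right-hand
side becomes affine in the logarithms of the factors, hence a sum of one contribution per child,
which is positive for each of the three vectors in `Ex_{c₂}(α)`.
-/

section LogBounds

lemma two_mul_add_cube_le_log_ratio {w : ℝ} (hw₀ : 0 ≤ w) (hw₁ : w < 1) :
    2 * w + 2 / 3 * w ^ 3 ≤ Real.log ((1 + w) / (1 - w)) := by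
  have h := Real.sum_range_le_log_div hw₀ hw₁ 2
  norm_num [Finset.sum_range_succ] at h
  linarith

lemma log_ratio_le_two_mul_add_cube {w : ℝ} (hw₀ : 0 ≤ w) (hw₁ : w ≤ 1 / 3) :
    Real.log ((1 + w) / (1 - w)) ≤ 2 * w + w ^ 3 := by
  have hsq : w ^ 2 ≤ 1 / 9 := by nlinarith
  have hrem : w ^ 5 / (1 - w ^ 2) ≤ w ^ 3 / 8 := by
    rw [div_le_iff₀ (by linarith)]
    nlinarith [mul_nonneg (pow_nonneg hw₀ 3) (sub_nonneg.mpr hsq)]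
  have h := Real.log_div_le_sum_range_add hw₀ (by linarith) 2
  norm_num [Finset.sum_range_succ] at h
  linarith [pow_nonneg hw₀ 3]

lemma one_sub_div_div_one_add_div {a b : ℝ} (hb : b ≠ 0) :
    (1 - a / b) / (1 + a / b) = (b - a) / (b + a) := by
  rw [one_sub_div hb, one_add_div hb, div_div_div_cancel_right₀ hb]

lemma log_inv_ratio (w : ℝ) :
    Real.log ((1 - w) / (1 + w)) = -Real.log ((1 + w) / (1 - w)) := by
  rw [← Real.log_inv, inv_div]

lemma two_mul_add_cube_le_neg_log {s : ℝ} (hs : 1 < s) :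
    2 * (1 / s) + 2 / 3 * (1 / s) ^ 3 ≤ -Real.log ((s - 1) / (s + 1)) := by
  rw [← one_sub_div_div_one_add_div (by linarith), log_inv_ratio, neg_neg]
  exact two_mul_add_cube_le_log_ratio (by positivity) ((div_lt_one (by linarith)).mpr hs)

end LogBounds

section TangentLine

lemma mul_one_sub_log_add_log_le {c x : ℝ} (hc : 0 < c) (hx : 0 < x) :
    c * (1 - Real.log c + Real.log x) ≤ x := by
  have h := Real.log_le_sub_one_of_pos (div_pos hx hc)
  rw [Real.log_div hx.ne' hc.ne'] at h
  calc c * (1 - Real.log c + Real.log x) ≤ c * (x / c) := by gcongr; linarith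
    _ = x := mul_div_cancel₀ x hc.ne'

lemma lt_mul_prod_add_mul_prod {ι : Type*} [Fintype ι] [Nonempty ι] {f g : ι → ℝ}
    {a b x y E Q : ℝ} (hf : ∀ k, 0 < f k) (hg : ∀ k, 0 < g k) (ha : 0 ≤ a) (hb : 0 ≤ b)
    (hx : 0 < x) (hy : 0 < y)
    (hE : Q + E ≤ a * x * (1 - Real.log x) + b * y * (1 - Real.log y))
    (hpos : ∀ k, 0 < E / Fintype.card ι + a * x * Real.log (f k) + b * y * Real.log (g k)) :
    Q < a * ∏ k, f k + b * ∏ k, g k := by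
  have hsum := Finset.sum_pos (fun k _ => hpos k) Finset.univ_nonempty
  simp only [Finset.sum_add_distrib, ← Finset.mul_sum, Finset.sum_const, Finset.card_univ,
    nsmul_eq_mul, mul_div_cancel₀ E (Nat.cast_ne_zero.mpr Fintype.card_ne_zero),
    ← Real.log_prod fun k _ => (hf k).ne', ← Real.log_prod fun k _ => (hg k).ne'] at hsum
  calc Q < a * (x * (1 - Real.log x + Real.log (∏ k, f k))) +
        b * (y * (1 - Real.log y + Real.log (∏ k, g k))) := by linarith
    _ ≤ a * ∏ k, f k + b * ∏ k, g k := by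
      gcongr
      · exact mul_one_sub_log_add_log_le hx (Finset.prod_pos fun k _ => hf k)
      · exact mul_one_sub_log_add_log_le hy (Finset.prod_pos fun k _ => hg k)

end TangentLine

section ChildFactors

/-- The factor contributed to `gfun` by a single child with message `v`. -/
noncomputable def childFactor {q : ℕ} (β : ℝ) (c₁ c₂ : Fin q) (v : Fin q → ℝ) : ℝ :=
  1 - (1 - β) * (v c₁ - v c₂) / (β * v c₂ + ∑ c ∈ Finset.univ.erase c₂, v c)

/-- For `q = 3`, the factor `childFactor β c₁ c₂ v` of the vector `v ∈ Ex_{c₂}(α)` whose only entry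
`α` is at `c₁`. -/
noncomputable def singleFactor (β α : ℝ) : ℝ := (2 + β * α) / (β + (α + 1))

/-- For `q = 3`, the factor `childFactor β c₁ c₂ v` of the vector `v ∈ Ex_{c₂}(α)` with two
entries `α`. -/
noncomputable def doubleFactor (β α : ℝ) : ℝ := (1 + α + β * α) / (β + (α + α))

/-- The pairs of factors which the three elements of `Ex_{c₂}(α)` contribute for `q = 3` to
`g_{c₁,c₂}` and `g_{c₃,c₂}`, where `c₃` is the third colour. -/
def extremalFactors (β α : ℝ) : Set (ℝ × ℝ) :=
  {(singleFactor β α, 1), (1, singleFactor β α), (doubleFactor β α, doubleFactor β α)}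

variable {β α : ℝ}

lemma extremalFactors_pos (hβ : 0 ≤ β) (hα : 0 < α) {x : ℝ × ℝ} (hx : x ∈ extremalFactors β α) :
    0 < x.1 ∧ 0 < x.2 := by
  have hsingle : 0 < singleFactor β α := by unfold singleFactor; positivity
  have hdouble : 0 < doubleFactor β α := by unfold doubleFactor; positivity
  rcases hx with rfl | rfl | rfl
  exacts [⟨hsingle, one_pos⟩, ⟨one_pos, hsingle⟩, ⟨hdouble, hdouble⟩]

lemma exists_erase_eq_pair {c₁ c₂ : Fin 3} (h : c₁ ≠ c₂) :
    ∃ c₃, c₁ ≠ c₃ ∧ Finset.univ.erase c₂ = {c₁, c₃} := by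
  revert c₁ c₂
  decide

lemma childFactor_mem_extremalFactors (hβ : 0 ≤ β) (hα : 1 < α) {c₁ c₂ c₃ : Fin 3}
    (h₁₃ : c₁ ≠ c₃) (herase : Finset.univ.erase c₂ = {c₁, c₃}) {v : Fin 3 → ℝ}
    (hv : v ∈ exSet 3 c₂ α) :
    (childFactor β c₁ c₂ v, childFactor β c₃ c₂ v) ∈ extremalFactors β α := by
  obtain ⟨hval, hone, c, hc⟩ := hv
  have hsingle : 1 - (1 - β) * (α - 1) / (β * 1 + (α + 1)) = singleFactor β α := by
    unfold singleFactor
    field_simp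
    ring
  have hdouble : 1 - (1 - β) * (α - 1) / (β * 1 + (α + α)) = doubleFactor β α := by
    unfold doubleFactor
    field_simp
    ring
  simp only [childFactor, herase, Finset.sum_pair h₁₃, hone]
  rcases hval c₁ with h₁ | h₁ <;> rcases hval c₃ with h₃ | h₃ <;> rw [h₁, h₃]
  · have hc₂ : c ≠ c₂ := by rintro rfl; linarith
    have hmem : c ∈ ({c₁, c₃} : Finset (Fin 3)) := herase ▸ Finset.mem_erase.mpr ⟨hc₂, by simp⟩
    rcases Finset.mem_insert.mp hmem with rfl | hmem
    · linarith
    · rw [Finset.mem_singleton.mp hmem] at hc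
      linarith
  · rw [add_comm 1 α, hsingle]
    simp [extremalFactors]
  · rw [hsingle]
    simp [extremalFactors]
  · rw [hdouble]
    simp [extremalFactors]

lemma hfun_three_eq {d : ℕ} {c₁ c₂ c₃ : Fin 3} (h₁₃ : c₁ ≠ c₃)
    (herase : Finset.univ.erase c₂ = {c₁, c₃}) (p : Fin d → Fin 3 → ℝ) :
    hfun 3 d β c₁ c₂ p = 1 + (1 - β) * (1 - ∏ k, childFactor β c₁ c₂ (p k)) /
      (β + (∏ k, childFactor β c₁ c₂ (p k) + ∏ k, childFactor β c₃ c₂ (p k))) := by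
  rw [hfun, herase, Finset.sum_pair h₁₃]
  rfl

lemma one_add_div_lt_ratio_iff {τ x y : ℝ} (hτ : τ < 1) (hden : 0 < β + (x + y)) :
    1 + (1 - β) * (1 - x) / (β + (x + y)) < (1 + τ) / (1 - τ) ↔
      (1 - β) - (1 + β) * τ < ((1 - β) + (1 + β) * τ) * x + 2 * τ * y := by
  have hτ' : 0 < 1 - τ := by linarith
  have hratio : (1 + τ) / (1 - τ) = 1 + 2 * τ / (1 - τ) := by
    field_simp
    ring
  rw [hratio, add_lt_add_iff_left, div_lt_div_iff₀ hden hτ']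
  constructor <;> intro h <;> linarith

end ChildFactors

section Critical

/-- The critical parameter `β_* = 1 - q / (d + 1)` for `q = 3`, as a function of a real `d`;
it is nonnegative for `d ≥ 2`. -/
noncomputable def criticalBeta (d : ℝ) : ℝ := 1 - 3 / (d + 1)

/-- A lower bound for `tanh (artanh (1 / s) / d)`. The coefficient of `1 / s ^ 3` in the expansion
of the latter is `(1 / 3 - 1 / (3 * d ^ 2)) / d`; doubling the correction `1 / (3 * d ^ 2)` absorbs
the higher-order terms. -/
noncomputable def tanhApprox (d s : ℝ) : ℝ := (1 / s + (1 / 3 - 2 / (3 * d ^ 2)) / s ^ 3) / d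

/-- The coefficient of `∏ fₖ` in the inequality to be shown, times the tangent point
`1 / α = (s - 1) / (s + 1)`. -/
noncomputable def tangentWeight₁ (d s : ℝ) : ℝ :=
  ((1 - criticalBeta d) + (1 + criticalBeta d) * tanhApprox d s) * ((s - 1) / (s + 1))

/-- The coefficient of `∏ gₖ` in the inequality to be shown, times the tangent point
`(2 * s - 1) / (2 * s + 1)`. -/
noncomputable def tangentWeight₂ (d s : ℝ) : ℝ :=
  2 * tanhApprox d s * ((2 * s - 1) / (2 * s + 1))

/-- The constant term of the affine minorant in the logarithms of the factors, with
`2 * w + 2 / 3 * w ^ 3` in place of `-log ((1 - w) / (1 + w))` at `w = 1 / s` and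
`w = 1 / (2 * s)`. -/
noncomputable def minorantConst (d s : ℝ) : ℝ :=
  tangentWeight₁ d s * (1 + (2 * (1 / s) + 2 / 3 * (1 / s) ^ 3)) +
    tangentWeight₂ d s * (1 + (2 * (1 / (2 * s)) + 2 / 3 * (1 / (2 * s)) ^ 3)) -
    ((1 - criticalBeta d) - (1 + criticalBeta d) * tanhApprox d s)

variable {d s : ℝ}

lemma criticalBeta_nonneg (hd : 2 ≤ d) : 0 ≤ criticalBeta d := by
  rw [criticalBeta, sub_nonneg, div_le_one (by linarith)]
  linarith

lemma tanhApprox_pos (hd : 2 ≤ d) (hs : 0 < s) : 0 < tanhApprox d s := by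
  have hcoeff : 2 / (3 * d ^ 2) < 1 / 3 := by
    rw [div_lt_div_iff₀ (by positivity) (by norm_num)]
    nlinarith
  have := sub_pos.mpr hcoeff
  unfold tanhApprox
  positivity

lemma tanhApprox_le (hd : 0 < d) (hs : 2 ≤ s) : tanhApprox d s ≤ 13 / 12 * (1 / (d * s)) := by
  have : 0 < s := by linarith
  have hcube : 1 / 3 / s ^ 3 ≤ 1 / 12 * (1 / s) := by
    rw [div_le_iff₀ (by positivity)]
    field_simp
    nlinarith
  calc tanhApprox d s ≤ (1 / s + 1 / 3 / s ^ 3) / d := by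
        unfold tanhApprox
        gcongr
        exact sub_le_self _ (by positivity)
    _ ≤ (1 / s + 1 / 12 * (1 / s)) / d := by gcongr
    _ = 13 / 12 * (1 / (d * s)) := by ring

lemma tanhApprox_le_one_third (hd : 2 ≤ d) (hs : 2 ≤ s) : tanhApprox d s ≤ 1 / 3 :=
  calc tanhApprox d s ≤ 13 / 12 * (1 / (d * s)) := tanhApprox_le (by linarith) hs
    _ ≤ 13 / 12 * (1 / (2 * 2)) := by gcongr
    _ ≤ 1 / 3 := by norm_num

lemma exists_eq_add_one_div_sub_one {α : ℝ} (hα₁ : 1 < α) (hα₂ : α ≤ 3) :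
    ∃ s : ℝ, 2 ≤ s ∧ α = (s + 1) / (s - 1) := by
  have hα : 0 < α - 1 := by linarith
  refine ⟨(α + 1) / (α - 1), by rw [le_div_iff₀ hα]; linarith, ?_⟩
  rw [div_add_one hα.ne', div_sub_one hα.ne', div_div_div_cancel_right₀ hα.ne',
    eq_div_iff (by linarith)]
  ring

lemma ratio_tanhApprox_le_rpow (hd : 2 ≤ d) (hs : 2 ≤ s) :
    (1 + tanhApprox d s) / (1 - tanhApprox d s) ≤ ((s + 1) / (s - 1)) ^ (1 / d) := by
  have hτ₀ := tanhApprox_pos hd (by linarith : 0 < s)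
  have hτ₁ := tanhApprox_le_one_third hd hs
  have hα₀ : 0 < (s + 1) / (s - 1) := div_pos (by linarith) (by linarith)
  have hcube : tanhApprox d s ^ 3 ≤ 4 / 3 * (1 / (d * s)) ^ 3 :=
    calc tanhApprox d s ^ 3 ≤ (13 / 12 * (1 / (d * s))) ^ 3 :=
          pow_le_pow_left₀ hτ₀.le (tanhApprox_le (by linarith) hs) 3
      _ = (13 / 12) ^ 3 * (1 / (d * s)) ^ 3 := mul_pow ..
      _ ≤ 4 / 3 * (1 / (d * s)) ^ 3 := by gcongr; norm_num
  rw [← Real.log_le_log_iff (div_pos (by linarith) (by linarith)) (Real.rpow_pos_of_pos hα₀ _),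
    Real.log_rpow hα₀]
  calc Real.log ((1 + tanhApprox d s) / (1 - tanhApprox d s))
      ≤ 2 * tanhApprox d s + tanhApprox d s ^ 3 := log_ratio_le_two_mul_add_cube hτ₀.le hτ₁
    _ ≤ 2 * tanhApprox d s + 4 / 3 * (1 / (d * s)) ^ 3 := by gcongr
    _ = 1 / d * (2 * (1 / s) + 2 / 3 * (1 / s) ^ 3) := by
      unfold tanhApprox
      field_simp
      ring
    _ ≤ 1 / d * Real.log ((s + 1) / (s - 1)) := by
      rw [← neg_neg (Real.log _), ← Real.log_inv, inv_div]
      gcongr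
      exact two_mul_add_cube_le_neg_log (by linarith)

lemma neg_log_singleFactor_le (hd : 2 ≤ d) (hs : 2 ≤ s) :
    -Real.log (singleFactor (criticalBeta d) ((s + 1) / (s - 1))) ≤
      2 * (3 / (3 * d * s - d - 1)) + (3 / (3 * d * s - d - 1)) ^ 3 := by
  have hden : 9 ≤ 3 * d * s - d - 1 := by nlinarith
  have hw : 3 / (3 * d * s - d - 1) ≤ 1 / 3 := by
    rw [div_le_div_iff₀ (by linarith) (by norm_num)]
    linarith
  have heq : singleFactor (criticalBeta d) ((s + 1) / (s - 1)) =
      (1 - 3 / (3 * d * s - d - 1)) / (1 + 3 / (3 * d * s - d - 1)) := by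
    have hs' : 0 < s - 1 := by linarith
    have hβ := criticalBeta_nonneg hd
    have : 0 < criticalBeta d + ((s + 1) / (s - 1) + 1) := by positivity
    have : 0 < 3 * d * s - d - 1 + 3 := by linarith
    rw [singleFactor, one_sub_div_div_one_add_div (by linarith),
      div_eq_div_iff (by linarith) (by linarith), criticalBeta]
    field_simp
    ring
  rw [heq, log_inv_ratio, neg_neg]
  exact log_ratio_le_two_mul_add_cube (by positivity) hw

lemma neg_log_doubleFactor_le (hd : 2 ≤ d) (hs : 2 ≤ s) :
    -Real.log (doubleFactor (criticalBeta d) ((s + 1) / (s - 1))) ≤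
      2 * (3 / (3 * d * s + d + 1)) + (3 / (3 * d * s + d + 1)) ^ 3 := by
  have hden : 9 ≤ 3 * d * s + d + 1 := by nlinarith
  have hw : 3 / (3 * d * s + d + 1) ≤ 1 / 3 := by
    rw [div_le_div_iff₀ (by linarith) (by norm_num)]
    linarith
  have heq : doubleFactor (criticalBeta d) ((s + 1) / (s - 1)) =
      (1 - 3 / (3 * d * s + d + 1)) / (1 + 3 / (3 * d * s + d + 1)) := by
    have hs' : 0 < s - 1 := by linarith
    have hβ := criticalBeta_nonneg hd
    have : 0 < criticalBeta d + ((s + 1) / (s - 1) + (s + 1) / (s - 1)) := by positivity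
    rw [doubleFactor, one_sub_div_div_one_add_div (by linarith),
      div_eq_div_iff (by linarith) (by linarith), criticalBeta]
    field_simp
    ring
  rw [heq, log_inv_ratio, neg_neg]
  exact log_ratio_le_two_mul_add_cube (by positivity) hw

/- After the shift `d = 2 + x`, `s = 2 + y`, the inequalities in the next three lemmas only involve
polynomials with nonnegative coefficients. -/

lemma tangentWeight₂_le_tangentWeight₁ (hd : 2 ≤ d) (hs : 2 ≤ s) :
    tangentWeight₂ d s ≤ tangentWeight₁ d s := by
  obtain ⟨x, hx, rfl⟩ := le_iff_exists_nonneg_add.mp hd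
  obtain ⟨y, hy, rfl⟩ := le_iff_exists_nonneg_add.mp hs
  rw [← sub_nonneg]
  unfold tangentWeight₁ tangentWeight₂ criticalBeta tanhApprox
  field_simp
  ring_nf
  positivity

lemma minorant_single_pos (hd : 2 ≤ d) (hs : 2 ≤ s) :
    0 < minorantConst d s / d - tangentWeight₁ d s *
      (2 * (3 / (3 * d * s - d - 1)) + (3 / (3 * d * s - d - 1)) ^ 3) := by
  obtain ⟨x, hx, rfl⟩ := le_iff_exists_nonneg_add.mp hd
  obtain ⟨y, hy, rfl⟩ := le_iff_exists_nonneg_add.mp hs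
  have hden : 3 * (2 + x) * (2 + y) - (2 + x) - 1 = 9 + 5 * x + 6 * y + 3 * x * y := by ring
  rw [hden]
  unfold minorantConst tangentWeight₁ tangentWeight₂ criticalBeta tanhApprox
  field_simp
  ring_nf
  positivity

lemma minorant_double_pos (hd : 2 ≤ d) (hs : 2 ≤ s) :
    0 < minorantConst d s / d - (tangentWeight₁ d s + tangentWeight₂ d s) *
      (2 * (3 / (3 * d * s + d + 1)) + (3 / (3 * d * s + d + 1)) ^ 3) := by
  obtain ⟨x, hx, rfl⟩ := le_iff_exists_nonneg_add.mp hd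
  obtain ⟨y, hy, rfl⟩ := le_iff_exists_nonneg_add.mp hs
  unfold minorantConst tangentWeight₁ tangentWeight₂ criticalBeta tanhApprox
  field_simp
  ring_nf
  positivity

lemma minorant_pos (hd : 2 ≤ d) (hs : 2 ≤ s) {x : ℝ × ℝ}
    (hx : x ∈ extremalFactors (criticalBeta d) ((s + 1) / (s - 1))) :
    0 < minorantConst d s / d + tangentWeight₁ d s * Real.log x.1 +
      tangentWeight₂ d s * Real.log x.2 := by
  have hτ := tanhApprox_pos hd (by linarith : 0 < s)
  have hw₂ : 0 ≤ tangentWeight₂ d s :=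
    mul_nonneg (by positivity) (div_nonneg (by linarith) (by linarith))
  have hw := tangentWeight₂_le_tangentWeight₁ hd hs
  have hw₁ := hw₂.trans hw
  have hden : 0 ≤ 3 * d * s - d - 1 := by nlinarith
  have hbound := neg_log_singleFactor_le hd hs
  have hsingle₁ := mul_le_mul_of_nonneg_left hbound hw₁
  have hsingle₂ := mul_le_mul_of_nonneg hw hbound hw₂ (by positivity)
  have hdouble := mul_le_mul_of_nonneg_left (neg_log_doubleFactor_le hd hs) (add_nonneg hw₁ hw₂)
  have hsingle_pos := minorant_single_pos hd hs
  have hdouble_pos := minorant_double_pos hd hs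
  rcases hx with rfl | rfl | rfl <;> simp only [Real.log_one] <;> linarith

lemma critical_prod_inequality {d : ℕ} (hd : 2 ≤ d) (hs : 2 ≤ s) {f g : Fin d → ℝ}
    (hfg : ∀ k, (f k, g k) ∈ extremalFactors (criticalBeta d) ((s + 1) / (s - 1))) :
    (1 - criticalBeta d) - (1 + criticalBeta d) * tanhApprox d s <
      ((1 - criticalBeta d) + (1 + criticalBeta d) * tanhApprox d s) * ∏ k, f k +
        2 * tanhApprox d s * ∏ k, g k := by
  have hd' : (2 : ℝ) ≤ d := by exact_mod_cast hd
  have : Nonempty (Fin d) := ⟨⟨0, by lia⟩⟩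
  have hτ := tanhApprox_pos hd' (by linarith : 0 < s)
  have hβ := criticalBeta_nonneg hd'
  have hβ₁ : criticalBeta d ≤ 1 := sub_le_self _ (by positivity)
  have hα : 0 < (s + 1) / (s - 1) := div_pos (by linarith) (by linarith)
  have hpos k := extremalFactors_pos hβ hα (hfg k)
  have hx : 0 < (s - 1) / (s + 1) := div_pos (by linarith) (by linarith)
  have hy : 0 < (2 * s - 1) / (2 * s + 1) := div_pos (by linarith) (by linarith)
  have ha : 0 ≤ (1 - criticalBeta d) + (1 + criticalBeta d) * tanhApprox d s :=
    add_nonneg (by linarith) (by positivity)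
  have hlogx := mul_le_mul_of_nonneg_left
    (two_mul_add_cube_le_neg_log (by linarith : 1 < s)) (mul_nonneg ha hx.le)
  have hlogy := mul_le_mul_of_nonneg_left
    (two_mul_add_cube_le_neg_log (by linarith : 1 < 2 * s))
    (by positivity : 0 ≤ 2 * tanhApprox d s * ((2 * s - 1) / (2 * s + 1)))
  refine lt_mul_prod_add_mul_prod (E := minorantConst d s) (fun k => (hpos k).1)
    (fun k => (hpos k).2) ha (by positivity) hx hy ?_ fun k => ?_
  · unfold minorantConst tangentWeight₁ tangentWeight₂
    linarith
  · rw [Fintype.card_fin]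
    exact minorant_pos hd' hs (hfg k)

end Critical

theorem potts_q3_condition_small_alpha_general (d : ℕ) (hd : 2 ≤ d)
    (α : ℝ) (hα1 : 1 < α) (hα2 : α ≤ 3) (c₁ c₂ : Fin 3)
    (p : Fin d → Fin 3 → ℝ) (hp : ∀ k, p k ∈ exSet 3 c₂ α) :
    hfun 3 d (max (1 - 3 / ((d : ℝ) + 1)) 0) c₁ c₂ p < α ^ (1 / (d : ℝ)) := by
  have hd' : (2 : ℝ) ≤ d := by exact_mod_cast hd
  have hβ := criticalBeta_nonneg hd'
  have hmax : max (1 - 3 / ((d : ℝ) + 1)) 0 = criticalBeta d := max_eq_left hβ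
  rw [hmax]
  rcases eq_or_ne c₁ c₂ with rfl | hc
  · simpa [hfun, gfun] using Real.one_lt_rpow hα1 (by positivity : 0 < 1 / (d : ℝ))
  obtain ⟨c₃, h₁₃, herase⟩ := exists_erase_eq_pair hc
  obtain ⟨s, hs, rfl⟩ := exists_eq_add_one_div_sub_one hα1 hα2
  have hfactors k := childFactor_mem_extremalFactors hβ hα1 h₁₃ herase (hp k)
  have hpos k := extremalFactors_pos hβ (by linarith) (hfactors k)
  have hprod₁ := Finset.prod_pos fun k (_ : k ∈ Finset.univ) => (hpos k).1
  have hprod₃ := Finset.prod_pos fun k (_ : k ∈ Finset.univ) => (hpos k).2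
  have hτ : tanhApprox d s < 1 := (tanhApprox_le_one_third hd' hs).trans_lt (by norm_num)
  rw [hfun_three_eq h₁₃ herase]
  calc _ < (1 + tanhApprox d s) / (1 - tanhApprox d s) :=
        (one_add_div_lt_ratio_iff hτ (by positivity)).mpr (critical_prod_inequality hd hs hfactors)
    _ ≤ _ := ratio_tanhApprox_le_rpow hd' hs

/-- For `q = 3` and `d ≥ 2`, the pair `(q,d)` satisfies Condition `𝒞(α)` for all
`α ∈ (1, 53/27]`: with `β_* = max{1 - 3/(d+1), 0}`, for all colours `c₁, c₂` and
all `p⁽¹⁾, …, p⁽ᵈ⁾ ∈ Ex_{c₂}(α)` we have `h_{c₁,c₂,β_*}(p⁽¹⁾,…,p⁽ᵈ⁾) < α^{1/d}`. -/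
theorem potts_q3_condition_small_alpha (d : ℕ) (hd : 2 ≤ d)
    (α : ℝ) (hα1 : 1 < α) (hα2 : α ≤ 53 / 27) (c₁ c₂ : Fin 3)
    (p : Fin d → Fin 3 → ℝ) (hp : ∀ k, p k ∈ exSet 3 c₂ α) :
    hfun 3 d (max (1 - 3 / ((d : ℝ) + 1)) 0) c₁ c₂ p < α ^ (1 / (d : ℝ)) := by
  exact potts_q3_condition_small_alpha_general d hd α hα1 (by linarith) c₁ c₂ p hp
end
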